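/- arXiv:2111.00907 — 3 statements merged into one kernel-verified Lean document; each statement's English description precedes it below -/
import Mathlib

section
/- Let (X,ρ) be a separable metric space, μ a blanketed Borel probability measure on X, q ∈ ℝ, and ξ ∈ Φ_D a blanketed premeasure. Then for every E ⊆ X, W^{q,ξ}_μ(E) = H^{q,ξ}_μ(E). -/
open Metric MeasureTheory Set Filter TopologicalSpace
open scoped ENNReal NNReal Classical

noncomputable section

/-- `x ^ q` for extended nonnegative reals, with the paper's convention
`0 ^ q = ∞` for `q ≤ 0`. -/
def epow (x : ℝ≥0∞) (q : ℝ) : ℝ≥0∞ := if x = 0 ∧ q ≤ 0 then ∞ else x ^ q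

variable {X X' : Type*}

section Defs

variable [MetricSpace X] [MetricSpace X']

/-- A premeasure on a metric space: an increasing `[0,∞]`-valued function on the family of
closed balls, vanishing on the empty set. -/
def IsPremeasure (ξ : Set X → ℝ≥0∞) : Prop :=
  ξ ∅ = 0 ∧ ∀ (x : X) (r : ℝ) (x' : X) (r' : ℝ),
    closedBall x r ⊆ closedBall x' r' → ξ (closedBall x r) ≤ ξ (closedBall x' r')

/-- The doubling ("blanketed") condition defining the class `Φ_D` of premeasures:
`ξ(B(x,2r)) ≤ K ξ(B(x,r))` for some constant `K > 1`, all `x` and all `0 < r ≤ 1`. -/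
def PremeasureBlanketed (ξ : Set X → ℝ≥0∞) : Prop :=
  ∃ K : ℝ≥0, 1 < K ∧ ∀ (x : X) (r : ℝ), 0 < r → r ≤ 1 →
    ξ (closedBall x (2 * r)) ≤ (K : ℝ≥0∞) * ξ (closedBall x r)

variable [MeasurableSpace X] [MeasurableSpace X']

/-- The support of a Borel measure on a metric space. -/
def measSupport (μ : Measure X) : Set X := {x : X | ∀ r : ℝ, 0 < r → 0 < μ (ball x r)}

/-- A blanketed (doubling) measure: for some `a > 1`,
`limsup_{r → 0⁺} sup_{x ∈ supp μ} μ(B(x,ar)) / μ(B(x,r)) < ∞`. -/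
def MeasureBlanketed (μ : Measure X) : Prop :=
  ∃ a : ℝ, 1 < a ∧
    limsup (fun r : ℝ => ⨆ x ∈ measSupport μ,
      μ (closedBall x (a * r)) / μ (closedBall x r)) (nhdsWithin 0 (Ioi 0)) < ∞

/-- The quantity `μ(B)^q ξ(B)` attached to a ball `B`. -/
def ballWeight (μ : Measure X) (q : ℝ) (ξ : Set X → ℝ≥0∞) (B : Set X) : ℝ≥0∞ :=
  epow (μ B) q * ξ B

/-- A centered `δ`-cover of `E`: countably many closed balls centered in `E`, of diameters
at most `2δ`, covering `E`. -/
def IsCenteredCover (E : Set X) (δ : ℝ) (c : ℕ → X) (r : ℕ → ℝ) : Prop :=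
  (∀ i, c i ∈ E) ∧ (∀ i, diam (closedBall (c i) (r i)) ≤ 2 * δ) ∧
    E ⊆ ⋃ i, closedBall (c i) (r i)

/-- The pre-Hausdorff quantity `H^{q,ξ}_{μ,δ}(E)`. -/
def Hd (μ : Measure X) (q : ℝ) (ξ : Set X → ℝ≥0∞) (δ : ℝ) (E : Set X) : ℝ≥0∞ :=
  if E = ∅ then 0 else
    ⨅ (c : ℕ → X) (r : ℕ → ℝ) (_ : IsCenteredCover E δ c r),
      ∑' i, ballWeight μ q ξ (closedBall (c i) (r i))

/-- `H^{q,ξ}_{μ,0}(E) = sup_{δ > 0} H^{q,ξ}_{μ,δ}(E)`. -/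
def H0 (μ : Measure X) (q : ℝ) (ξ : Set X → ℝ≥0∞) (E : Set X) : ℝ≥0∞ :=
  ⨆ (δ : ℝ) (_ : 0 < δ), Hd μ q ξ δ E

/-- The generalized Hausdorff measure `H^{q,ξ}_μ(E) = sup_{F ⊆ E} H^{q,ξ}_{μ,0}(F)`. -/
def HM (μ : Measure X) (q : ℝ) (ξ : Set X → ℝ≥0∞) (E : Set X) : ℝ≥0∞ :=
  ⨆ (F : Set X) (_ : F ⊆ E), H0 μ q ξ F

/-- A weighted and centered `δ`-cover of `E`: countably many pairs `(w i, B i)` of nonnegative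
weights and closed balls centered in `E` of diameters at most `2δ`, with
`Σ {w i : x ∈ B i} ≥ 1` for every `x ∈ E`. -/
def IsWeightedCover (E : Set X) (δ : ℝ) (w : ℕ → ℝ≥0) (c : ℕ → X) (r : ℕ → ℝ) : Prop :=
  (∀ i, c i ∈ E) ∧ (∀ i, diam (closedBall (c i) (r i)) ≤ 2 * δ) ∧
    ∀ x ∈ E, 1 ≤ ∑' i, (if x ∈ closedBall (c i) (r i) then (w i : ℝ≥0∞) else 0)

/-- The pre-weighted-Hausdorff quantity `W^{q,ξ}_{μ,δ}(E)`. -/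
def Wd (μ : Measure X) (q : ℝ) (ξ : Set X → ℝ≥0∞) (δ : ℝ) (E : Set X) : ℝ≥0∞ :=
  if E = ∅ then 0 else
    ⨅ (w : ℕ → ℝ≥0) (c : ℕ → X) (r : ℕ → ℝ) (_ : IsWeightedCover E δ w c r),
      ∑' i, (w i : ℝ≥0∞) * ballWeight μ q ξ (closedBall (c i) (r i))

/-- `W^{q,ξ}_{μ,0}(E) = sup_{δ > 0} W^{q,ξ}_{μ,δ}(E)`. -/
def W0 (μ : Measure X) (q : ℝ) (ξ : Set X → ℝ≥0∞) (E : Set X) : ℝ≥0∞ :=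
  ⨆ (δ : ℝ) (_ : 0 < δ), Wd μ q ξ δ E

/-- The weighted generalized Hausdorff measure `W^{q,ξ}_μ(E) = sup_{F ⊆ E} W^{q,ξ}_{μ,0}(F)`. -/
def WM (μ : Measure X) (q : ℝ) (ξ : Set X → ℝ≥0∞) (E : Set X) : ℝ≥0∞ :=
  ⨆ (F : Set X) (_ : F ⊆ E), W0 μ q ξ F

/-- Hypothesis (H) for `(X, ξ, μ)`: for every `ε > 0`, `X` can be covered by countably many
closed balls of diameters `< ε` on which `μ(B)^q ξ(B)` is finite. -/
def HypH (μ : Measure X) (q : ℝ) (ξ : Set X → ℝ≥0∞) : Prop :=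
  ∀ ε : ℝ, 0 < ε → ∃ (c : ℕ → X) (r : ℕ → ℝ),
    (univ : Set X) ⊆ (⋃ i, closedBall (c i) (r i)) ∧
    (∀ i, diam (closedBall (c i) (r i)) < ε) ∧
    ∀ i, ballWeight μ q ξ (closedBall (c i) (r i)) < ∞

/-- The product premeasure `ξ₀(B × B') = ξ(B) ξ'(B')` on the product space (whose closed balls
are exactly the products `B(x,r) × B(x',r)`), with the convention `0 ⬝ ∞ = ∞ ⬝ 0 = 0`. -/
def prodPre (ξ : Set X → ℝ≥0∞) (ξ' : Set X' → ℝ≥0∞) : Set (X × X') → ℝ≥0∞ :=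
  fun S => ξ (Prod.fst '' S) * ξ' (Prod.snd '' S)

/-- Two sets are (positively) separated: `inf {ρ(x,y) : x ∈ E, y ∈ F} > 0`. -/
def SepSets (E F : Set X) : Prop := 0 < ⨅ x ∈ E, ⨅ y ∈ F, edist x y

/-- The upper `(q,ξ)`-density of `ν` at `x` with respect to `μ`:
`limsup_{r → 0⁺} ν(B(x,r)) / (μ(B(x,r))^q ξ(B(x,r)))`. -/
def upperDensity (μ : Measure X) (q : ℝ) (ξ : Set X → ℝ≥0∞) (x : X) (ν : Measure X) : ℝ≥0∞ :=
  limsup (fun r : ℝ => ν (closedBall x r) / ballWeight μ q ξ (closedBall x r))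
    (nhdsWithin 0 (Ioi 0))

/-- A Hausdorff function: right continuous, monotone increasing `h : [0,∞] → [0,∞]` with
`h(0) = 0` and `h(r) > 0` for `r > 0`. -/
def IsHausdorffFunction (h : ℝ≥0∞ → ℝ≥0∞) : Prop :=
  Monotone h ∧ h 0 = 0 ∧ (∀ r : ℝ≥0∞, 0 < r → 0 < h r) ∧
    ∀ r : ℝ≥0∞, ContinuousWithinAt h (Ici r) r

/-- The premeasure `ξ_h` induced by a Hausdorff function: `ξ_h(B) = h(diam B)` for `B ≠ ∅`,
`ξ_h(∅) = 0`. -/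
def hausPre (h : ℝ≥0∞ → ℝ≥0∞) : Set X → ℝ≥0∞ :=
  fun B => if B = ∅ then 0 else h (EMetric.diam B)

end Defs

section Helpers

lemma hlp_pick_exists (A : Set ℝ) (hA : MeasurableSet A) (a : ℝ≥0)
    (h : (a : ℝ≥0∞) ≤ (volume.restrict (Icc (0:ℝ) 1)) A) :
    ∃ S, S ⊆ A ∧ MeasurableSet S ∧ (volume.restrict (Icc (0:ℝ) 1)) S = a := by
  set ν : Measure ℝ := volume.restrict (Icc (0:ℝ) 1) with hν
  have hfin : ∀ S, ν S ≠ ∞ := fun S => by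
    have : IsFiniteMeasure ν := by rw [hν]; infer_instance
    exact measure_ne_top _ _
  let g : ℝ → ℝ := fun s => (ν (A ∩ Iic s)).toReal
  have hg : LipschitzWith 1 g := by
    apply LipschitzWith.of_le_add
    intro x y
    have h1 : ν (A ∩ Iic x) ≤ ν (A ∩ Iic y) + ENNReal.ofReal (dist x y) := by
      have : A ∩ Iic x ⊆ (A ∩ Iic y) ∪ Ioc y x := by
        intro z hz
        by_cases hzy : z ≤ y
        · exact Or.inl ⟨hz.1, hzy⟩
        · exact Or.inr ⟨not_le.1 hzy, hz.2⟩
      refine (measure_mono this).trans ((measure_union_le _ _).trans ?_)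
      gcongr
      refine (Measure.restrict_apply_le _ _).trans ?_
      rw [Real.volume_Ioc]
      apply ENNReal.ofReal_le_ofReal
      rw [Real.dist_eq]; exact le_abs_self _
    have := ENNReal.toReal_mono (by finiteness [hfin (A ∩ Iic y)]) h1
    rwa [ENNReal.toReal_add (hfin _) (by finiteness), ENNReal.toReal_ofReal dist_nonneg] at this
  have h0 : g 0 = 0 := by
    have : ν (A ∩ Iic 0) = 0 := by
      rw [hν, Measure.restrict_apply (hA.inter measurableSet_Iic)]
      refine measure_mono_null (t := {0}) ?_ (by simp)
      rintro z ⟨⟨_, hz⟩, hz2⟩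
      exact le_antisymm hz hz2.1
    simp [g, this]
  have h1 : g 1 = (ν A).toReal := by
    have : ν (A ∩ Iic 1) = ν A := by
      rw [hν, Measure.restrict_apply (hA.inter measurableSet_Iic), Measure.restrict_apply hA]
      congr 1
      ext z; simp only [mem_inter_iff, mem_Iic, mem_Icc]; tauto
    simp [g, this]
  have hmem : (a : ℝ) ∈ Icc (g 0) (g 1) := by
    rw [h0, h1]
    refine ⟨a.2, ?_⟩
    have := ENNReal.toReal_mono (hfin A) h
    simpa using this
  obtain ⟨s, _, hs⟩ := intermediate_value_Icc (zero_le_one' ℝ) hg.continuous.continuousOn hmem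
  refine ⟨A ∩ Iic s, inter_subset_left, hA.inter measurableSet_Iic, ?_⟩
  rw [← ENNReal.ofReal_toReal (hfin (A ∩ Iic s))]
  change ENNReal.ofReal (g s) = a
  rw [hs]; simp

def hlpPick (a : ℝ≥0) (A : Set ℝ) : Set ℝ :=
  if h : ∃ S, S ⊆ A ∧ MeasurableSet S ∧ (volume.restrict (Icc (0:ℝ) 1)) S = a then h.choose else A

lemma hlp_pick_subset (a : ℝ≥0) (A : Set ℝ) : hlpPick a A ⊆ A := by
  unfold hlpPick
  split_ifs with h
  · exact h.choose_spec.1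
  · exact subset_rfl

lemma hlp_pick_meas (a : ℝ≥0) (A : Set ℝ) (hA : MeasurableSet A) : MeasurableSet (hlpPick a A) := by
  unfold hlpPick
  split_ifs with h
  · exact h.choose_spec.2.1
  · exact hA

lemma hlp_pick_spec (a : ℝ≥0) (A : Set ℝ) (hA : MeasurableSet A) :
    (volume.restrict (Icc (0:ℝ) 1)) (hlpPick a A) ≤ a ∧
    (hlpPick a A = A ∨ (volume.restrict (Icc (0:ℝ) 1)) (hlpPick a A) = a) := by
  unfold hlpPick
  split_ifs with h
  · exact ⟨h.choose_spec.2.2.le, Or.inr h.choose_spec.2.2⟩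
  · refine ⟨?_, Or.inl rfl⟩
    by_contra hc
    exact h (hlp_pick_exists A hA a (not_le.1 hc).le)

lemma hlp_rank {ι : Type*} (r : ι → ℝ) (R : ℝ) (h0 : ∀ i, 0 ≤ r i) (hR : ∀ i, r i ≤ R) :
    ∃ k : ι → ℕ∞, ∀ i j, k j ≤ k i → r i ≤ 2 * r j := by
  have H : ∀ i, ∃ k : ℕ∞, (k = ⊤ → r i = 0) ∧
      (∀ n : ℕ, k = n → (1/2:ℝ)^(n+1) * R < r i ∧ r i ≤ (1/2:ℝ)^n * R) := by
    intro i
    rcases (h0 i).eq_or_lt with h | h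
    · exact ⟨⊤, fun _ => h.symm, fun n hn => absurd hn (ENat.top_ne_natCast n)⟩
    · have hRp : 0 < R := h.trans_le (hR i)
      obtain ⟨n, hn1, hn2⟩ := exists_nat_pow_near_of_lt_one (x := r i / R) (y := (1/2:ℝ))
        (by positivity) ((div_le_one hRp).2 (hR i)) (by norm_num) (by norm_num)
      refine ⟨n, fun h => absurd h (ENat.natCast_ne_top n), fun m hm => ?_⟩
      have : n = m := by exact_mod_cast hm
      subst this
      exact ⟨(lt_div_iff₀ hRp).1 hn1, (div_le_iff₀ hRp).1 hn2⟩
  choose k hk1 hk2 using H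
  refine ⟨k, fun i j hij => ?_⟩
  by_cases hi : k i = ⊤
  · rw [hk1 i hi]; linarith [h0 j]
  · obtain ⟨n, hn⟩ := ENat.ne_top_iff_exists.1 hi
    have hj : k j ≠ ⊤ := fun h => hi (top_le_iff.1 (h ▸ hij))
    obtain ⟨m, hm⟩ := ENat.ne_top_iff_exists.1 hj
    have h1 := (hk2 i n hn.symm).2
    have h2 := (hk2 j m hm.symm).1
    have hmn : m ≤ n := by rw [← hn, ← hm] at hij; exact_mod_cast hij
    have hRp : 0 ≤ R := (h0 i).trans (hR i)
    have h3 : (1/2:ℝ)^n ≤ (1/2:ℝ)^m := pow_le_pow_of_le_one (by norm_num) (by norm_num) hmn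
    have h4 : (1/2:ℝ)^n * R ≤ (1/2:ℝ)^m * R := by gcongr
    rw [pow_succ] at h2
    linarith

variable [MetricSpace X]

lemma hlp_select {ι : Type*} [Countable ι] (x : ι → X) (r : ι → ℝ) (R : ℝ)
    (h0 : ∀ i, 0 ≤ r i) (hR : ∀ i, r i ≤ R) (c : ι → ℝ≥0) (w : ι → ℝ≥0∞) (F : Set X)
    (hF : ∀ y ∈ F, 1 < ∑' i, (if y ∈ closedBall (x i) (r i) then (c i : ℝ≥0∞) else 0)) :
    ∃ S : Set ι, F ⊆ (⋃ i ∈ S, closedBall (x i) (5 * r i)) ∧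
      ∑' i : S, w i ≤ ∑' i, (c i : ℝ≥0∞) * w i := by
  obtain ⟨k, hk⟩ := hlp_rank r R h0 hR
  obtain ⟨e, he⟩ := exists_injective_nat ι
  set ν : Measure ℝ := volume.restrict (Icc (0:ℝ) 1) with hν
  have hprob : IsProbabilityMeasure ν := ⟨by simp [hν]⟩
  let f : ι → ℕ∞ ×ₗ ℕ := fun i => toLex (k i, e i)
  have hf : Function.Injective f := by
    intro i j hij
    have : (k i, e i) = (k j, e j) := toLex.injective hij
    exact he (Prod.ext_iff.1 this).2
  have wf : WellFounded (fun i j : ι => f i < f j) := InvImage.wf f wellFounded_lt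
  let B : ι → Set X := fun i => closedBall (x i) (r i)
  let T : ι → Set ℝ := wf.fix (fun i T' =>
    hlpPick (c i) (univ \ ⋃ (j : ι) (h : f j < f i) (_ : (B j ∩ B i).Nonempty), T' j h))
  let A : ι → Set ℝ := fun i => univ \ ⋃ (j : ι) (_ : f j < f i) (_ : (B j ∩ B i).Nonempty), T j
  have hT : ∀ i, T i = hlpPick (c i) (A i) := fun i => wf.fix_eq _ i
  have hTm : ∀ i, MeasurableSet (T i) := by
    intro i
    induction i using wf.induction with
    | _ i ih =>
      rw [hT]
      apply hlp_pick_meas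
      refine MeasurableSet.univ.diff (MeasurableSet.iUnion fun j => MeasurableSet.iUnion fun h =>
        MeasurableSet.iUnion fun _ => ih j h)
  have hAm : ∀ i, MeasurableSet (A i) := fun i =>
    MeasurableSet.univ.diff (MeasurableSet.iUnion fun j => MeasurableSet.iUnion fun h =>
        MeasurableSet.iUnion fun _ => hTm j)
  have hdisj0 : ∀ i j, f j < f i → (B j ∩ B i).Nonempty → Disjoint (T i) (T j) := by
    intro i j hij hB
    rw [Set.disjoint_left]
    intro t hti htj
    rw [hT i] at hti
    exact (hlp_pick_subset _ _ hti).2 (mem_iUnion₂.2 ⟨j, hij, mem_iUnion.2 ⟨hB, htj⟩⟩)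
  have hdisj : ∀ i j, i ≠ j → (B j ∩ B i).Nonempty → Disjoint (T i) (T j) := by
    intro i j hij hB
    rcases lt_or_gt_of_ne (hf.ne hij) with h | h
    · exact (hdisj0 j i h (by rwa [inter_comm])).symm
    · exact hdisj0 i j h hB
  have hsp := fun i => hlp_pick_spec (c i) (A i) (hAm i)
  simp only [← hT] at hsp
  have hcov : ∀ t : ℝ, F ⊆ ⋃ i ∈ {i | t ∈ T i}, closedBall (x i) (5 * r i) := by
    intro t y hy
    have hex : ∃ i, y ∈ B i ∧ T i = A i := by
      by_contra hcon
      push Not at hcon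
      have hle : ∑' i, (if y ∈ B i then (c i : ℝ≥0∞) else 0) ≤ 1 := by
        have h1 : ∀ i, (if y ∈ B i then (c i : ℝ≥0∞) else 0) = ν (if y ∈ B i then T i else ∅) := by
          intro i
          split_ifs with h
          · exact ((hsp i).2.resolve_left (hcon i h)).symm
          · simp
        simp_rw [h1]
        rw [← measure_iUnion]
        · exact prob_le_one
        · intro i j hij
          change Disjoint (if y ∈ B i then T i else ∅) (if y ∈ B j then T j else ∅)
          split_ifs with hi hj
          · exact hdisj i j hij ⟨y, hj, hi⟩
          all_goals simp
        · intro i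
          split_ifs
          · exact hTm i
          · exact MeasurableSet.empty
      exact absurd (hF y hy) (not_lt.2 hle)
    obtain ⟨i, hyi, hTi⟩ := hex
    by_cases ht : t ∈ T i
    · refine mem_iUnion₂.2 ⟨i, ht, ?_⟩
      exact closedBall_subset_closedBall (by linarith [h0 i]) hyi
    · rw [hTi] at ht
      simp only [A, Set.mem_sdiff, mem_univ, true_and, not_not] at ht
      obtain ⟨j, hj, ht⟩ := mem_iUnion₂.1 ht
      obtain ⟨⟨z, hzj, hzi⟩, ht⟩ := mem_iUnion.1 ht
      refine mem_iUnion₂.2 ⟨j, ht, ?_⟩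
      have hkk : k j ≤ k i := by
        rcases Prod.Lex.lt_iff.1 hj with h | h
        · exact h.le
        · exact h.1.le
      have := hk i j hkk
      simp only [B, mem_closedBall] at hzj hzi hyi ⊢
      have := dist_triangle y (x i) (x j)
      have := dist_triangle (x i) z (x j)
      rw [dist_comm (x i) z] at this
      linarith
  obtain ⟨t, ht⟩ := exists_le_lintegral (μ := ν) (f := fun t => ∑' i, (T i).indicator (fun _ => w i) t)
    (Measurable.aemeasurable (Measurable.tsum fun i => measurable_const.indicator (hTm i)))
  refine ⟨{i | t ∈ T i}, hcov t, ?_⟩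
  rw [lintegral_tsum (fun i => (measurable_const.indicator (hTm i)).aemeasurable)] at ht
  calc ∑' i : {i | t ∈ T i}, w i = ∑' i, (T i).indicator (fun _ => w i) t := by
        rw [tsum_subtype {i | t ∈ T i} w]
        congr 1
    _ ≤ _ := ht
    _ ≤ _ := by
      refine ENNReal.tsum_le_tsum fun i => ?_
      rw [lintegral_indicator_const (hTm i), mul_comm]
      gcongr
      exact (hsp i).1

/-- Trimming: a nonempty closed ball of small diameter has a small radius. -/
lemma hlp_trim (x : X) (r : ℝ) (hr : 0 ≤ r) :
    ∃ ρ, 0 ≤ ρ ∧ ρ ≤ diam (closedBall x r) ∧ closedBall x ρ = closedBall x r := by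
  refine ⟨min r (diam (closedBall x r)), le_min hr diam_nonneg, min_le_right _ _, ?_⟩
  apply Subset.antisymm
  · exact closedBall_subset_closedBall (min_le_left _ _)
  · intro y hy
    refine mem_closedBall.2 (le_min hy ?_)
    exact dist_le_diam_of_mem isBounded_closedBall hy (mem_closedBall_self hr)

variable [MeasurableSpace X]

lemma hlp_weight_empty (μ : Measure X) (q : ℝ) (ξ : Set X → ℝ≥0∞) (hξ : IsPremeasure ξ) :
    ballWeight μ q ξ ∅ = 0 := by
  simp [ballWeight, hξ.1]

lemma hlp_Hd_le (μ : Measure X) (q : ℝ) (ξ : Set X → ℝ≥0∞) (hξ : IsPremeasure ξ)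
    {δ : ℝ} (hδ : 0 < δ) {A : Set X} {ι : Type*} [Countable ι] (c : ι → X) (r : ι → ℝ)
    (hc : ∀ i, c i ∈ A) (hd : ∀ i, diam (closedBall (c i) (r i)) ≤ 2 * δ)
    (hcov : A ⊆ ⋃ i, closedBall (c i) (r i)) :
    Hd μ q ξ δ A ≤ ∑' i, ballWeight μ q ξ (closedBall (c i) (r i)) := by
  unfold Hd
  split_ifs with hA
  · simp
  obtain ⟨a, ha⟩ := nonempty_iff_ne_empty.2 hA
  obtain ⟨e, he⟩ := exists_injective_nat ι
  obtain ⟨c', r', h1, h2, h3⟩ : ∃ (c' : ℕ → X) (r' : ℕ → ℝ), (∀ i, c' (e i) = c i) ∧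
      (∀ i, r' (e i) = r i) ∧ ∀ n, (¬ ∃ i, e i = n) → c' n = a ∧ r' n = -1 :=
    ⟨Function.extend e c (fun _ => a), Function.extend e r (fun _ => -1),
      fun i => he.extend_apply _ _ _, fun i => he.extend_apply _ _ _, fun n hn =>
      ⟨Function.extend_apply' _ _ _ hn, Function.extend_apply' _ _ _ hn⟩⟩
  have h4 : ∀ n, (¬ ∃ i, e i = n) → closedBall (c' n) (r' n) = ∅ := fun n hn => by
    rw [(h3 n hn).2]; exact closedBall_eq_empty.2 (by norm_num)
  have hcc : IsCenteredCover A δ c' r' := by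
    refine ⟨?_, ?_, ?_⟩
    · intro n
      by_cases hn : ∃ i, e i = n
      · obtain ⟨i, rfl⟩ := hn
        rw [h1]; exact hc i
      · rw [(h3 n hn).1]; exact ha
    · intro n
      by_cases hn : ∃ i, e i = n
      · obtain ⟨i, rfl⟩ := hn
        rw [h1, h2]; exact hd i
      · rw [h4 n hn]; simp [hδ.le]
    · intro y hy
      obtain ⟨i, hi⟩ := mem_iUnion.1 (hcov hy)
      refine mem_iUnion.2 ⟨e i, ?_⟩
      rwa [h1, h2]
  refine iInf_le_of_le c' (iInf_le_of_le r' (iInf_le_of_le hcc ?_))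
  have hsupp : Function.support (fun n => ballWeight μ q ξ (closedBall (c' n) (r' n))) ⊆ range e := by
    refine Function.support_subset_iff'.2 fun n hcon => ?_
    rw [h4 n hcon, hlp_weight_empty μ q ξ hξ]
  rw [← he.tsum_eq hsupp]
  refine le_of_eq (tsum_congr fun i => ?_)
  rw [h1, h2]

lemma hlp_Hd_lt (μ : Measure X) (q : ℝ) (ξ : Set X → ℝ≥0∞)
    {δ : ℝ} {A : Set X} {a : ℝ≥0∞} (h : Hd μ q ξ δ A < a) :
    ∃ (S : Set ℕ) (c : S → X) (r : S → ℝ), (∀ i, c i ∈ A) ∧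
      (∀ i, diam (closedBall (c i) (r i)) ≤ 2 * δ) ∧ A ⊆ (⋃ i, closedBall (c i) (r i)) ∧
      ∑' i, ballWeight μ q ξ (closedBall (c i) (r i)) < a := by
  unfold Hd at h
  split_ifs at h with hA
  · refine ⟨∅, fun i => i.2.elim, fun i => i.2.elim, fun i => i.2.elim, fun i => i.2.elim,
      by simp [hA], by simpa using h⟩
  · simp only [iInf_lt_iff] at h
    obtain ⟨c, r, hcr, h⟩ := h
    refine ⟨univ, fun i => c i, fun i => r i, fun i => hcr.1 i, fun i => hcr.2.1 i, ?_, ?_⟩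
    · intro y hy
      obtain ⟨i, hi⟩ := mem_iUnion.1 (hcr.2.2 hy)
      exact mem_iUnion.2 ⟨⟨i, mem_univ i⟩, hi⟩
    · rwa [tsum_univ (fun i => ballWeight μ q ξ (closedBall (c i) (r i)))]

lemma hlp_Hd_anti (μ : Measure X) (q : ℝ) (ξ : Set X → ℝ≥0∞) {δ δ' : ℝ} (h : δ ≤ δ') (A : Set X) :
    Hd μ q ξ δ' A ≤ Hd μ q ξ δ A := by
  unfold Hd
  split_ifs with hA
  · exact le_rfl
  · refine le_iInf fun c => le_iInf fun r => le_iInf fun hcr => ?_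
    refine (iInf₂_le c r).trans (iInf_le _ ⟨hcr.1, fun i => (hcr.2.1 i).trans (by linarith), hcr.2.2⟩)

lemma hlp_Hd_iUnion (μ : Measure X) (q : ℝ) (ξ : Set X → ℝ≥0∞) (hξ : IsPremeasure ξ)
    {δ : ℝ} (hδ : 0 < δ) {κ : Type*} [Countable κ] (A : κ → Set X) :
    Hd μ q ξ δ (⋃ n, A n) ≤ ∑' n, Hd μ q ξ δ (A n) := by
  by_cases htop : ∑' n, Hd μ q ξ δ (A n) = ∞
  · rw [htop]; exact le_top
  refine ENNReal.le_of_forall_pos_le_add fun ε hε _ => ?_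
  obtain ⟨ε', hε', hsum⟩ := ENNReal.exists_pos_sum_of_countable (ε := (ε : ℝ≥0∞)) (by simpa using hε.ne') κ
  have hne : ∀ n, Hd μ q ξ δ (A n) ≠ ∞ := fun n => ENNReal.ne_top_of_tsum_ne_top htop n
  have := fun n => hlp_Hd_lt μ q ξ (ENNReal.lt_add_right (hne n) (ENNReal.coe_pos.2 (hε' n)).ne')
  choose S c r h1 h2 h3 h4 using this
  refine (hlp_Hd_le μ q ξ hξ hδ (ι := Σ n, S n) (fun p => c p.1 p.2) (fun p => r p.1 p.2)
    (fun p => mem_iUnion.2 ⟨p.1, h1 _ _⟩) (fun p => h2 _ _) ?_).trans ?_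
  · intro y hy
    obtain ⟨n, hn⟩ := mem_iUnion.1 hy
    obtain ⟨i, hi⟩ := mem_iUnion.1 (h3 n hn)
    exact mem_iUnion.2 ⟨⟨n, i⟩, hi⟩
  · rw [ENNReal.tsum_sigma']
    refine (ENNReal.tsum_le_tsum fun n => (h4 n).le).trans ?_
    rw [ENNReal.tsum_add]
    gcongr

lemma hlp_Hd_union (μ : Measure X) (q : ℝ) (ξ : Set X → ℝ≥0∞) (hξ : IsPremeasure ξ)
    {δ : ℝ} (hδ : 0 < δ) (A B : Set X) :
    Hd μ q ξ δ (A ∪ B) ≤ Hd μ q ξ δ A + Hd μ q ξ δ B := by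
  have := hlp_Hd_iUnion μ q ξ hξ hδ (fun b : Bool => cond b A B)
  rw [← union_eq_iUnion, tsum_bool] at this
  simpa [add_comm] using this

lemma hlp_Hd_le_HM (μ : Measure X) (q : ℝ) (ξ : Set X → ℝ≥0∞) {δ : ℝ} (hδ : 0 < δ)
    {F E : Set X} (h : F ⊆ E) : Hd μ q ξ δ F ≤ HM μ q ξ E :=
  (le_iSup₂ (f := fun (δ : ℝ) (_ : 0 < δ) => Hd μ q ξ δ F) δ hδ).trans
    (le_iSup₂ (f := fun (F : Set X) (_ : F ⊆ E) => H0 μ q ξ F) F h)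

lemma hlp_HM_le (μ : Measure X) (q : ℝ) (ξ : Set X → ℝ≥0∞) {E : Set X} {a : ℝ≥0∞}
    {δ₀ : ℝ} (hδ₀ : 0 < δ₀)
    (h : ∀ F ⊆ E, ∀ δ, 0 < δ → δ ≤ δ₀ → Hd μ q ξ δ F ≤ a) : HM μ q ξ E ≤ a := by
  refine iSup₂_le fun F hF => iSup₂_le fun δ hδ => ?_
  exact (hlp_Hd_anti μ q ξ (min_le_left δ δ₀) F).trans (h F hF _ (lt_min hδ hδ₀) (min_le_right _ _))

lemma hlp_Wd_le_WM (μ : Measure X) (q : ℝ) (ξ : Set X → ℝ≥0∞) {δ : ℝ} (hδ : 0 < δ)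
    {F E : Set X} (h : F ⊆ E) : Wd μ q ξ δ F ≤ WM μ q ξ E :=
  (le_iSup₂ (f := fun (δ : ℝ) (_ : 0 < δ) => Wd μ q ξ δ F) δ hδ).trans
    (le_iSup₂ (f := fun (F : Set X) (_ : F ⊆ E) => W0 μ q ξ F) F h)

lemma hlp_HM_mono (μ : Measure X) (q : ℝ) (ξ : Set X → ℝ≥0∞) {E E' : Set X} (h : E ⊆ E') :
    HM μ q ξ E ≤ HM μ q ξ E' :=
  hlp_HM_le μ q ξ one_pos fun _ hF _ hδ _ => hlp_Hd_le_HM μ q ξ hδ (hF.trans h)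

lemma hlp_HM_empty (μ : Measure X) (q : ℝ) (ξ : Set X → ℝ≥0∞) : HM μ q ξ ∅ = 0 := by
  refine le_antisymm (hlp_HM_le μ q ξ one_pos fun F hF δ _ _ => ?_) zero_le
  rw [subset_empty_iff.1 hF]; simp [Hd]

def hlpOM (μ : Measure X) (q : ℝ) (ξ : Set X → ℝ≥0∞) (hξ : IsPremeasure ξ) : OuterMeasure X where
  measureOf := HM μ q ξ
  empty := hlp_HM_empty μ q ξ
  mono := hlp_HM_mono μ q ξ
  iUnion_nat := by
    intro s _
    refine hlp_HM_le μ q ξ one_pos fun F hF δ hδ _ => ?_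
    have : F = ⋃ n, F ∩ s n := by rw [← inter_iUnion, inter_eq_left.2 hF]
    rw [this]
    refine (hlp_Hd_iUnion μ q ξ hξ hδ _).trans (ENNReal.tsum_le_tsum fun n => ?_)
    exact hlp_Hd_le_HM μ q ξ hδ inter_subset_right

lemma hlp_Hd_add (μ : Measure X) (q : ℝ) (ξ : Set X → ℝ≥0∞) (hξ : IsPremeasure ξ)
    {δ : ℝ} (hδ : 0 < δ) (A B : Set X) (h : ∀ x ∈ A, ∀ y ∈ B, 2 * δ < dist x y) :
    Hd μ q ξ δ A + Hd μ q ξ δ B ≤ Hd μ q ξ δ (A ∪ B) := by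
  refine le_of_forall_gt fun a ha => ?_
  obtain ⟨S, c, r, h1, h2, h3, h4⟩ := hlp_Hd_lt μ q ξ ha
  have key : ∀ C D : Set X, C ∪ D = A ∪ B → (∀ x ∈ C, ∀ y ∈ D, 2 * δ < dist x y) →
      Hd μ q ξ δ C ≤ ∑' i : {i | c i ∈ C}, ballWeight μ q ξ (closedBall (c i) (r i)) := by
    intro C D hCD hsep
    refine hlp_Hd_le μ q ξ hξ hδ (ι := {i | c i ∈ C}) (fun i => c i) (fun i => r i)
      (fun i => i.2) (fun i => h2 i) ?_
    intro y hy
    obtain ⟨i, hi⟩ := mem_iUnion.1 (h3 (hCD ▸ Or.inl hy : y ∈ A ∪ B))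
    have hci : c i ∈ C := by
      have : c i ∈ C ∪ D := hCD ▸ h1 i
      rcases this with h | h
      · exact h
      · exfalso
        have h5 := hsep y hy _ h
        have hr : 0 ≤ r i := dist_nonneg.trans hi
        have := dist_le_diam_of_mem isBounded_closedBall hi (mem_closedBall_self hr)
        linarith [h2 i]
    exact mem_iUnion.2 ⟨⟨i, hci⟩, hi⟩
  have kA := key A B rfl h
  have kB := key B A (union_comm _ _) (fun x hx y hy => by rw [dist_comm]; exact h y hy x hx)
  refine lt_of_le_of_lt (add_le_add kA kB) (lt_of_le_of_lt ?_ h4)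
  have hdis : Disjoint {i | c i ∈ A} {i | c i ∈ B} := by
    rw [Set.disjoint_left]
    intro i hA hB
    have := h _ hA _ hB
    rw [dist_self] at this; linarith
  rw [← ENNReal.summable.tsum_union_disjoint
    (f := fun i => ballWeight μ q ξ (closedBall (c i) (r i))) hdis ENNReal.summable]
  exact ENNReal.tsum_comp_le_tsum_of_injective Subtype.val_injective _

lemma hlp_OM_metric (μ : Measure X) (q : ℝ) (ξ : Set X → ℝ≥0∞) (hξ : IsPremeasure ξ) :
    (hlpOM μ q ξ hξ).IsMetric := by
  rintro A B ⟨ρ, hρ, hsep⟩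
  refine le_antisymm (measure_union_le _ _) ?_
  change HM μ q ξ A + HM μ q ξ B ≤ HM μ q ξ (A ∪ B)
  obtain ⟨η, hη0, hηρ⟩ : ∃ η : ℝ, 0 < η ∧ ENNReal.ofReal (3 * η) ≤ ρ := by
    by_cases hρt : ρ = ∞
    · exact ⟨1, one_pos, by rw [hρt]; exact le_top⟩
    · refine ⟨ρ.toReal / 3, by have := ENNReal.toReal_pos hρ hρt; positivity, ?_⟩
      rw [mul_div_cancel₀ _ (by norm_num : (3:ℝ) ≠ 0), ENNReal.ofReal_toReal hρt]
  have hsep' : ∀ x ∈ A, ∀ y ∈ B, 3 * η ≤ dist x y := by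
    intro x hx y hy
    have := hηρ.trans (hsep x hx y hy)
    rw [edist_dist] at this
    exact (ENNReal.ofReal_le_ofReal_iff dist_nonneg).1 this
  have hall : ∀ F ⊆ A, ∀ G ⊆ B, ∀ δ δ', 0 < δ → 0 < δ' →
      Hd μ q ξ δ F + Hd μ q ξ δ' G ≤ HM μ q ξ (A ∪ B) := by
    intro F hF G hG δ δ' hδ hδ'
    set d := min (min δ δ') η
    have hd : 0 < d := lt_min (lt_min hδ hδ') hη0
    have hd1 : d ≤ δ := (min_le_left _ _).trans (min_le_left _ _)
    have hd2 : d ≤ δ' := (min_le_left _ _).trans (min_le_right _ _)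
    have hd3 : d ≤ η := min_le_right _ _
    calc _ ≤ Hd μ q ξ d F + Hd μ q ξ d G :=
          add_le_add (hlp_Hd_anti μ q ξ hd1 F) (hlp_Hd_anti μ q ξ hd2 G)
      _ ≤ Hd μ q ξ d (F ∪ G) := hlp_Hd_add μ q ξ hξ hd _ _ fun x hx y hy => by
          have := hsep' x (hF hx) y (hG hy); linarith
      _ ≤ _ := hlp_Hd_le_HM μ q ξ hd (union_subset_union hF hG)
  refine ENNReal.biSup_add_biSup_le' (p := fun F => F ⊆ A) (q := fun G => G ⊆ B)
    ⟨∅, empty_subset _⟩ ⟨∅, empty_subset _⟩ fun F hF G hG => ?_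
  exact ENNReal.biSup_add_biSup_le' ⟨1, one_pos⟩ ⟨1, one_pos⟩ fun δ hδ δ' hδ' =>
    hall F hF G hG δ δ' hδ hδ'

def hlpDW (μ : Measure X) (q : ℝ) (ξ : Set X → ℝ≥0∞) (E : Set X) (C : ℝ≥0) (δ₀ : ℝ) : Prop :=
  ∀ x ∈ E, ∀ r, 0 ≤ r → r ≤ δ₀ → ∀ y, dist y x ≤ 5 * r →
    ballWeight μ q ξ (closedBall y (10 * r)) ≤ C * ballWeight μ q ξ (closedBall x r)

lemma hlp_enlarge (μ : Measure X) (q : ℝ) (ξ : Set X → ℝ≥0∞) (hξ : IsPremeasure ξ)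
    {E : Set X} {C : ℝ≥0} {δ₀ : ℝ} (hDW : hlpDW μ q ξ E C δ₀) {δ : ℝ} (hδ : 0 < δ) (A : Set X)
    {ι : Type*} [Countable ι] (x : ι → X) (r : ι → ℝ) (hx : ∀ i, x i ∈ E) (h0 : ∀ i, 0 ≤ r i)
    (hr : ∀ i, r i ≤ δ₀) (hr' : ∀ i, 10 * r i ≤ δ)
    (hcov : A ⊆ ⋃ i, closedBall (x i) (5 * r i)) :
    Hd μ q ξ δ A ≤ C * ∑' i, ballWeight μ q ξ (closedBall (x i) (r i)) := by
  let J : Set ι := {i | (A ∩ closedBall (x i) (5 * r i)).Nonempty}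
  have hJ : ∀ i : J, ∃ y, y ∈ A ∧ y ∈ closedBall (x i) (5 * r i) := fun i => i.2
  choose y hyA hy using hJ
  refine (hlp_Hd_le μ q ξ hξ hδ y (fun i => 10 * r i) hyA ?_ ?_).trans ?_
  · intro i
    refine (diam_closedBall (by linarith [h0 i])).trans ?_
    linarith [hr' i]
  · intro z hz
    obtain ⟨i, hi⟩ := mem_iUnion.1 (hcov hz)
    refine mem_iUnion.2 ⟨⟨i, ⟨z, hz, hi⟩⟩, ?_⟩
    have h2 := hy ⟨i, ⟨z, hz, hi⟩⟩
    simp only [mem_closedBall] at h2 hi ⊢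
    have := dist_triangle_right z (y ⟨i, ⟨z, hz, hi⟩⟩) (x i)
    linarith
  · rw [← ENNReal.tsum_mul_left]
    refine (ENNReal.tsum_le_tsum fun i : J => hDW (x i) (hx i) (r i) (h0 i) (hr i) (y i) (hy i)).trans ?_
    exact ENNReal.tsum_comp_le_tsum_of_injective Subtype.val_injective
      (fun i => (C : ℝ≥0∞) * ballWeight μ q ξ (closedBall (x i) (r i)))

lemma hlp_compare (μ : Measure X) (q : ℝ) (ξ : Set X → ℝ≥0∞) (hξ : IsPremeasure ξ)
    {E : Set X} {C : ℝ≥0} (hC : 1 ≤ C) {δ₀ : ℝ} (hδ₀ : 0 < δ₀) (hDW : hlpDW μ q ξ E C δ₀) :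
    HM μ q ξ E ≤ (C * 2) * WM μ q ξ E := by
  refine hlp_HM_le μ q ξ hδ₀ fun F hF δ hδ hδδ => ?_
  have hδ' : 0 < δ / 20 := by positivity
  refine le_trans ?_ (mul_le_mul_right (hlp_Wd_le_WM μ q ξ hδ' hF) _)
  have hC0 : (C : ℝ≥0∞) * 2 ≠ 0 := by
    have : C ≠ 0 := (zero_lt_one.trans_le hC).ne'
    simp [this]
  have hCt : (C : ℝ≥0∞) * 2 ≠ ∞ := by finiteness
  rw [mul_comm, ← ENNReal.div_le_iff_le_mul (Or.inl hC0) (Or.inl hCt)]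
  unfold Wd
  split_ifs with hFe
  · simp [Hd, hFe]
  refine le_iInf fun w => le_iInf fun c => le_iInf fun r => le_iInf fun hcr => ?_
  rw [ENNReal.div_le_iff_le_mul (Or.inl hC0) (Or.inl hCt), mul_comm]
  let ι := {i : ℕ // 0 ≤ r i}
  have := fun i : ι => hlp_trim (c i) (r i) i.2
  choose ρ hρ0 hρd hρ using this
  have hρ1 : ∀ i, ρ i ≤ δ / 10 := fun i => by linarith [hρd i, hcr.2.1 i]
  obtain ⟨S, hS1, hS2⟩ := hlp_select (fun i : ι => c i) ρ (δ / 10) hρ0 hρ1 (fun i => 2 * w i)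
    (fun i => ballWeight μ q ξ (closedBall (c i) (ρ i))) F (by
      intro y hy
      have h1 := hcr.2.2 y hy
      have h2 : ∑' i, (if y ∈ closedBall (c i) (r i) then (w i : ℝ≥0∞) else 0)
          = ∑' i : ι, (if y ∈ closedBall (c i) (ρ i) then (w i : ℝ≥0∞) else 0) := by
        simp_rw [hρ]
        refine (Function.Injective.tsum_eq (g := fun i : ι => (i : ℕ))
          (f := fun i => (if y ∈ closedBall (c i) (r i) then (w i : ℝ≥0∞) else 0))
          Subtype.val_injective ?_).symm
        refine Function.support_subset_iff'.2 fun n hn => ?_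
        rw [if_neg]
        intro hmem
        exact hn ⟨⟨n, dist_nonneg.trans hmem⟩, rfl⟩
      rw [h2] at h1
      calc (1 : ℝ≥0∞) < 2 * 1 := by norm_num
        _ ≤ 2 * _ := mul_le_mul_right h1 2
        _ = _ := by
          rw [← ENNReal.tsum_mul_left]
          refine tsum_congr fun i => ?_
          split_ifs <;> simp)
  refine (hlp_enlarge μ q ξ hξ hDW hδ F (ι := S) (fun i => c i) (fun i => ρ i)
    (fun i => hF (hcr.1 _)) (fun i => hρ0 _) (fun i => by linarith [hρ1 i])
    (fun i => by linarith [hρ1 i]) (by rwa [biUnion_eq_iUnion] at hS1)).trans ?_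
  rw [mul_assoc]
  gcongr
  refine hS2.trans ?_
  rw [← ENNReal.tsum_mul_left]
  simp_rw [hρ]
  refine le_trans (le_of_eq (tsum_congr fun i => ?_)) (ENNReal.tsum_comp_le_tsum_of_injective
    (f := fun i : ι => (i : ℕ)) Subtype.val_injective
    (fun i => 2 * ((w i : ℝ≥0∞) * ballWeight μ q ξ (closedBall (c i) (r i)))))
  push_cast
  rw [mul_assoc]

lemma hlp_vitali [SeparableSpace X] [BorelSpace X]
    (μ : Measure X) (q : ℝ) (ξ : Set X → ℝ≥0∞) (hξ : IsPremeasure ξ)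
    {E : Set X} {C : ℝ≥0} {δ₀ : ℝ} (hδ₀ : 0 < δ₀) (hDW : hlpDW μ q ξ E C δ₀)
    (ν : Measure X) [IsFiniteMeasure ν] (t : ℝ≥0) {G : Set X} (hGE : G ⊆ E)
    (hG : ∀ x ∈ G, ∀ ε : ℝ, 0 < ε → ∃ r, 0 < r ∧ r ≤ ε ∧
      t * ballWeight μ q ξ (closedBall x r) ≤ ν (closedBall x r))
    {δ : ℝ} (hδ : 0 < δ) : t * Hd μ q ξ δ G ≤ ν G := by
  refine ENNReal.le_of_forall_pos_le_add fun ε hε _ => ?_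
  have hε2 : (ε / 2 : ℝ≥0∞) ≠ 0 := by simpa using hε.ne'
  obtain ⟨U, hGU, hUo, hU⟩ := G.exists_isOpen_le_add ν hε2
  set ρ₀ := min (δ / 10) δ₀
  have hρ₀ : 0 < ρ₀ := lt_min (by positivity) hδ₀
  have hρ1 : ρ₀ ≤ δ / 10 := min_le_left _ _
  have hρ2 : ρ₀ ≤ δ₀ := min_le_right _ _
  let B : X × ℝ → Set X := fun p => closedBall p.1 p.2
  let Q : Set (X × ℝ) := {p | p.1 ∈ G ∧ 0 < p.2 ∧ p.2 ≤ ρ₀ ∧ B p ⊆ U ∧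
    t * ballWeight μ q ξ (B p) ≤ ν (B p)}
  obtain ⟨u, huQ, hud, hu⟩ := Vitali.exists_disjoint_subfamily_covering_enlargement B Q
    (fun p => p.2) 2 one_lt_two (fun p hp => hp.2.1.le) ρ₀ (fun p hp => hp.2.2.1)
    (fun p hp => ⟨p.1, mem_closedBall_self hp.2.1.le⟩)
  have huc : u.Countable := hud.countable_of_nonempty_interior fun p hp =>
    ⟨p.1, ball_subset_interior_closedBall (mem_ball_self (huQ hp).2.1)⟩
  have : Countable u := huc
  have hsum : ∑' p : u, ν (B p) ≤ ν U := by
    rw [← measure_iUnion]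
    · exact measure_mono (iUnion_subset fun p => (huQ p.2).2.2.2.1)
    · intro p p' hpp
      exact hud p.2 p'.2 (fun h => hpp (Subtype.ext h))
    · intro p; exact isClosed_closedBall.measurableSet
  have hη : (0 : ℝ≥0∞) < ε / 2 / C :=
    ENNReal.div_pos hε2 ENNReal.coe_ne_top
  have htail := ENNReal.tendsto_tsum_compl_atTop_zero (f := fun p : u => ν (B p))
    (ne_top_of_le_ne_top (measure_ne_top ν U) hsum)
  obtain ⟨v, hv⟩ := ((tendsto_order.1 htail).2 _ hη).exists
  set V : Set X := ⋃ p ∈ v, B p with hV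
  have hVc : IsClosed V := v.finite_toSet.isClosed_biUnion fun p _ => isClosed_closedBall
  have e1 : Hd μ q ξ δ (G ∩ V) ≤ ∑' p : v, ballWeight μ q ξ (B p) := by
    refine hlp_Hd_le μ q ξ hξ hδ (ι := v) (fun p => (p : u).1.1) (fun p => (p : u).1.2) ?_ ?_ ?_
    · intro p
      refine ⟨(huQ p.1.2).1, mem_iUnion₂.2 ⟨p.1, p.2, ?_⟩⟩
      exact mem_closedBall_self (huQ p.1.2).2.1.le
    · intro p
      have h1 := (huQ p.1.2).2.1
      have h2 := (huQ p.1.2).2.2.1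
      refine (diam_closedBall h1.le).trans ?_
      linarith
    · rintro y ⟨_, hy⟩
      obtain ⟨p, hp, hy⟩ := mem_iUnion₂.1 hy
      exact mem_iUnion.2 ⟨⟨p, hp⟩, hy⟩
  have e2 : Hd μ q ξ δ (G \ V) ≤ C * ∑' p : {p : u // p ∉ v}, ballWeight μ q ξ (B p) := by
    refine hlp_enlarge μ q ξ hξ hDW hδ (G \ V) (ι := {p : u // p ∉ v})
      (fun p => (p : u).1.1) (fun p => (p : u).1.2) (fun p => hGE (huQ p.1.2).1)
      (fun p => (huQ p.1.2).2.1.le) (fun p => (huQ p.1.2).2.2.1.trans hρ2)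
      (fun p => by linarith [(huQ p.1.2).2.2.1]) ?_
    rintro y ⟨hyG, hyV⟩
    have hO : U ∩ Vᶜ ∈ nhds y := (hUo.inter hVc.isOpen_compl).mem_nhds ⟨hGU hyG, hyV⟩
    obtain ⟨s, hs0, hs⟩ := nhds_basis_closedBall.mem_iff.1 hO
    obtain ⟨r, hr0, hr, hrw⟩ := hG y hyG (min s ρ₀) (lt_min hs0 hρ₀)
    have hsub : closedBall y r ⊆ U ∩ Vᶜ :=
      (closedBall_subset_closedBall (hr.trans (min_le_left _ _))).trans hs
    obtain ⟨b, hbu, ⟨z, hz1, hz2⟩, hb2⟩ := hu (y, r) ⟨hyG, hr0, hr.trans (min_le_right _ _),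
      fun z hz => (hsub hz).1, hrw⟩
    have hbv : (⟨b, hbu⟩ : u) ∉ v := fun hbv =>
      (hsub hz1).2 (mem_iUnion₂.2 ⟨⟨b, hbu⟩, hbv, hz2⟩)
    refine mem_iUnion.2 ⟨⟨⟨b, hbu⟩, hbv⟩, ?_⟩
    simp only [B, mem_closedBall] at hz1 hz2 hb2 ⊢
    have := dist_triangle y z b.1
    rw [dist_comm y z] at this
    have := (huQ hbu).2.1
    linarith
  have hw : ∀ p : u, t * ballWeight μ q ξ (B p) ≤ ν (B p) := fun p => (huQ p.2).2.2.2.2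
  calc t * Hd μ q ξ δ G ≤ t * (Hd μ q ξ δ (G ∩ V) + Hd μ q ξ δ (G \ V)) := by
        gcongr
        have := hlp_Hd_union μ q ξ hξ hδ (G ∩ V) (G \ V)
        rwa [inter_union_sdiff] at this
    _ ≤ t * (∑' p : v, ballWeight μ q ξ (B p)
          + C * ∑' p : {p : u // p ∉ v}, ballWeight μ q ξ (B p)) := by gcongr
    _ = ∑' p : v, t * ballWeight μ q ξ (B p)
          + C * ∑' p : {p : u // p ∉ v}, t * ballWeight μ q ξ (B p) := by
        rw [ENNReal.tsum_mul_left, ENNReal.tsum_mul_left]; ring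
    _ ≤ ∑' p : v, ν (B p) + C * ∑' p : {p : u // p ∉ v}, ν (B p) := by
        gcongr with p p
        · exact hw p
        · exact hw p
    _ ≤ ν U + C * (ε / 2 / C) := by
        gcongr
        exact (ENNReal.tsum_comp_le_tsum_of_injective (f := fun p : v => (p : u))
          Subtype.val_injective (fun p : u => ν (B p))).trans hsum
    _ ≤ (ν G + ε / 2) + ε / 2 := by
        gcongr
        exact ENNReal.mul_div_le
    _ = ν G + ε := by rw [add_assoc, ENNReal.add_halves]

lemma hlp_HM_singleton (μ : Measure X) (q : ℝ) (ξ : Set X → ℝ≥0∞) (hξ : IsPremeasure ξ) (x : X) :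
    HM μ q ξ {x} ≤ ballWeight μ q ξ (closedBall x 0) := by
  refine hlp_HM_le μ q ξ one_pos fun F hF δ hδ _ => ?_
  rcases subset_singleton_iff_eq.1 hF with rfl | rfl
  · simp [Hd]
  · refine (hlp_Hd_le μ q ξ hξ hδ (ι := Unit) (fun _ => x) (fun _ => 0) (fun _ => mem_singleton x)
      (fun _ => by simp [hδ.le]) (fun y hy => mem_iUnion.2 ⟨(), by
        rw [mem_singleton_iff.1 hy]; exact mem_closedBall_self le_rfl⟩)).trans ?_
    simp

lemma hlp_weighted_bound [BorelSpace X]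
    (μ : Measure X) (q : ℝ) (ξ : Set X → ℝ≥0∞) (hξ : IsPremeasure ξ)
    (ν : Measure X) (t : ℝ≥0) (ht : t ≠ 0) {L : Set X} {η : ℝ} (hη : 0 < η)
    (hL : ∀ x ∈ L, ∀ r, 0 ≤ r → r ≤ η →
      ν (closedBall x r) ≤ t * ballWeight μ q ξ (closedBall x r)) :
    ν L ≤ t * Wd μ q ξ (η / 2) L := by
  unfold Wd
  split_ifs with hLe
  · simp [hLe]
  have ht0 : (t : ℝ≥0∞) ≠ 0 := by simpa using ht
  rw [mul_comm, ← ENNReal.div_le_iff_le_mul (Or.inl ht0) (Or.inl ENNReal.coe_ne_top)]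
  refine le_iInf fun w => le_iInf fun c => le_iInf fun r => le_iInf fun hcr => ?_
  rw [ENNReal.div_le_iff_le_mul (Or.inl ht0) (Or.inl ENNReal.coe_ne_top), mul_comm]
  have hb : ∀ i, ν (closedBall (c i) (r i)) ≤ t * ballWeight μ q ξ (closedBall (c i) (r i)) := by
    intro i
    by_cases hr : 0 ≤ r i
    · obtain ⟨ρ, hρ0, hρd, hρ⟩ := hlp_trim (c i) (r i) hr
      rw [← hρ]
      exact hL _ (hcr.1 i) ρ hρ0 (by linarith [hcr.2.1 i])
    · rw [closedBall_eq_empty.2 (not_le.1 hr)]; simp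
  have hm : ∀ i, Measurable ((closedBall (c i) (r i)).indicator (fun _ => (w i : ℝ≥0∞))) :=
    fun i => measurable_const.indicator isClosed_closedBall.measurableSet
  calc ν L ≤ ν {y | 1 ≤ ∑' i, (closedBall (c i) (r i)).indicator (fun _ => (w i : ℝ≥0∞)) y} := by
        refine measure_mono fun y hy => ?_
        simpa only [indicator_apply, mem_setOf_eq] using hcr.2.2 y hy
    _ ≤ ∫⁻ y, ∑' i, (closedBall (c i) (r i)).indicator (fun _ => (w i : ℝ≥0∞)) y ∂ν := by
        have hmeas : Measurable (fun y => ∑' i, (closedBall (c i) (r i)).indicator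
            (fun _ => (w i : ℝ≥0∞)) y) := Measurable.tsum hm
        have := mul_meas_ge_le_lintegral (μ := ν) hmeas 1
        simpa using this
    _ = ∑' i, (w i : ℝ≥0∞) * ν (closedBall (c i) (r i)) := by
        rw [lintegral_tsum fun i => (hm i).aemeasurable]
        refine tsum_congr fun i => ?_
        rw [lintegral_indicator_const isClosed_closedBall.measurableSet]
    _ ≤ ∑' i, t * ((w i : ℝ≥0∞) * ballWeight μ q ξ (closedBall (c i) (r i))) := by
        refine ENNReal.tsum_le_tsum fun i => ?_
        rw [mul_left_comm]
        gcongr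
        exact hb i
    _ = _ := ENNReal.tsum_mul_left

lemma hlp_main [SeparableSpace X] [BorelSpace X]
    (μ : Measure X) (q : ℝ) (ξ : Set X → ℝ≥0∞) (hξ : IsPremeasure ξ)
    {E : Set X} {C : ℝ≥0} (hC : 1 ≤ C) {δ₀ : ℝ} (hδ₀ : 0 < δ₀) (hDW : hlpDW μ q ξ E C δ₀) :
    HM μ q ξ E ≤ WM μ q ξ E := by
  by_cases hWt : WM μ q ξ E = ∞
  · rw [hWt]; exact le_top
  have hHt : HM μ q ξ E ≠ ∞ :=
    ne_top_of_le_ne_top (by finiteness) (hlp_compare μ q ξ hξ hC hδ₀ hDW)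
  have hcar : ‹MeasurableSpace X› ≤ (OuterMeasure.restrict E (hlpOM μ q ξ hξ)).caratheodory := by
    intro s hs
    have h1 := (hlp_OM_metric μ q ξ hξ).borel_le_caratheodory s
      (by rwa [← BorelSpace.measurable_eq (α := X)])
    intro T
    have := h1 (T ∩ E)
    simp only [OuterMeasure.restrict_apply]
    rw [this]
    congr 2
    · ext z; simp only [mem_inter_iff]; tauto
    · ext z; simp only [mem_inter_iff, Set.mem_sdiff]; tauto
  set ν : Measure X := (OuterMeasure.restrict E (hlpOM μ q ξ hξ)).toMeasure hcar with hνdef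
  have hν : ∀ s, MeasurableSet s → ν s = HM μ q ξ (s ∩ E) := by
    intro s hs
    rw [hνdef, toMeasure_apply _ _ hs, OuterMeasure.restrict_apply]
    rfl
  have hfin : IsFiniteMeasure ν := ⟨by
    rw [hν _ MeasurableSet.univ, univ_inter]; exact hHt.lt_top⟩
  have key : ∀ t : ℝ≥0, 1 < t → HM μ q ξ E ≤ t * WM μ q ξ E := by
    intro t ht
    let Ln : ℕ → Set X := fun n => {x | x ∈ E ∧ ∀ r, 0 < r → r ≤ 1 / ((n : ℝ) + 1) →
      ν (closedBall x r) ≤ t * ballWeight μ q ξ (closedBall x r)}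
    have hmono : Monotone Ln := by
      intro n m hnm x hx
      refine ⟨hx.1, fun r hr hr' => hx.2 r hr (hr'.trans ?_)⟩
      exact Nat.one_div_le_one_div hnm
    set L := ⋃ n, Ln n with hLdef
    have hLn : ∀ n, ν (Ln n) ≤ t * WM μ q ξ E := by
      intro n
      have hη : 0 < 1 / ((n : ℝ) + 1) := Nat.one_div_pos_of_nat
      refine (hlp_weighted_bound μ q ξ hξ ν t (zero_lt_one.trans ht).ne' hη ?_).trans
        (mul_le_mul_right (hlp_Wd_le_WM μ q ξ (by positivity) fun x hx => hx.1) _)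
      intro x hx r hr hr'
      rcases hr.eq_or_lt with rfl | hr
      · rw [hν _ isClosed_closedBall.measurableSet]
        calc _ ≤ HM μ q ξ {x} := hlp_HM_mono μ q ξ (by simp)
          _ ≤ 1 * ballWeight μ q ξ (closedBall x 0) := by
              rw [one_mul]; exact hlp_HM_singleton μ q ξ hξ x
          _ ≤ _ := by gcongr; exact_mod_cast ht.le
      · exact hx.2 r hr hr'
    have hL : ν L ≤ t * WM μ q ξ E := by
      rw [hLdef, hmono.measure_iUnion]
      exact iSup_le hLn
    set M := toMeasurable ν L
    have hMm : MeasurableSet M := measurableSet_toMeasurable _ _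
    have hE' : HM μ q ξ (Mᶜ ∩ E) = 0 := by
      have h1 : t * HM μ q ξ (Mᶜ ∩ E) ≤ HM μ q ξ (Mᶜ ∩ E) := by
        rw [mul_comm, ← ENNReal.le_div_iff_mul_le (Or.inl (by
          simpa using (zero_lt_one.trans ht).ne')) (Or.inl ENNReal.coe_ne_top)]
        refine hlp_HM_le μ q ξ one_pos fun F hF δ hδ _ => ?_
        rw [ENNReal.le_div_iff_mul_le (Or.inl (by
          simpa using (zero_lt_one.trans ht).ne')) (Or.inl ENNReal.coe_ne_top), mul_comm,
          ← hν _ hMm.compl]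
        refine (hlp_vitali μ q ξ hξ hδ₀ hDW ν t (hF.trans inter_subset_right) ?_ hδ).trans
          (measure_mono (hF.trans inter_subset_left))
        intro x hx ε hε
        by_contra hcon
        push Not at hcon
        obtain ⟨n, hn⟩ := exists_nat_one_div_lt hε
        refine (hF hx).1 (subset_toMeasurable ν L (mem_iUnion.2 ⟨n, (hF hx).2, fun r hr hr' => ?_⟩))
        exact (hcon r hr (hr'.trans hn.le)).le
      have hne : HM μ q ξ (Mᶜ ∩ E) ≠ ∞ :=
        ne_top_of_le_ne_top hHt (hlp_HM_mono μ q ξ inter_subset_right)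
      by_contra h0
      have h2 : 1 * HM μ q ξ (Mᶜ ∩ E) < t * HM μ q ξ (Mᶜ ∩ E) :=
        ENNReal.mul_lt_mul_left h0 hne (by exact_mod_cast ht)
      rw [one_mul] at h2
      exact absurd h1 (not_le.2 h2)
    calc HM μ q ξ E = ν univ := by rw [hν _ MeasurableSet.univ, univ_inter]
      _ = ν M + ν Mᶜ := (measure_add_measure_compl hMm).symm
      _ = ν L := by rw [hν _ hMm.compl, hE', add_zero]; exact measure_toMeasurable L
      _ ≤ _ := hL
  by_contra hcon
  push Not at hcon
  obtain ⟨a, ha1, ha2⟩ := exists_between hcon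
  have hW0 : WM μ q ξ E ≠ 0 := by
    intro h0
    have := key 2 one_lt_two
    rw [h0, mul_zero] at this
    exact absurd hcon (not_lt.2 (this.trans zero_le))
  have hat : a ≠ ∞ := ne_top_of_lt ha2
  have hdt : a / WM μ q ξ E ≠ ∞ := ENNReal.div_ne_top hat hW0
  have h1 : 1 < (a / WM μ q ξ E).toNNReal := by
    rw [← ENNReal.coe_lt_coe, ENNReal.coe_toNNReal hdt]
    rw [ENNReal.coe_one, ENNReal.lt_div_iff_mul_lt (Or.inl hW0) (Or.inl hWt), one_mul]
    exact ha1
  have h2 := key _ h1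
  rw [ENNReal.coe_toNNReal hdt, ENNReal.div_mul_cancel hW0 hWt] at h2
  exact absurd ha2 (not_lt.2 h2)

lemma hlp_W_le_H (μ : Measure X) (q : ℝ) (ξ : Set X → ℝ≥0∞) (E : Set X) :
    WM μ q ξ E ≤ HM μ q ξ E := by
  refine iSup₂_mono fun F hF => iSup₂_mono fun δ hδ => ?_
  unfold Wd Hd
  split_ifs with h
  · exact le_rfl
  refine le_iInf fun c => le_iInf fun r => le_iInf fun hcr => ?_
  have hw : IsWeightedCover F δ (fun _ => 1) c r := by
    refine ⟨hcr.1, hcr.2.1, fun x hx => ?_⟩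
    obtain ⟨i, hi⟩ := mem_iUnion.1 (hcr.2.2 hx)
    refine le_trans ?_ (ENNReal.le_tsum i)
    rw [if_pos hi]; simp
  refine iInf_le_of_le (fun _ => 1) (iInf_le_of_le c (iInf_le_of_le r (iInf_le_of_le hw ?_)))
  simp

lemma hlp_off_support [SeparableSpace X] (μ : Measure X) (q : ℝ) (hq : 0 < q)
    (ξ : Set X → ℝ≥0∞) (hξ : IsPremeasure ξ) :
    HM μ q ξ (measSupport μ)ᶜ = 0 := by
  have : SecondCountableTopology X := UniformSpace.secondCountable_of_separable X
  refine le_antisymm (hlp_HM_le μ q ξ one_pos fun F hF δ hδ _ => ?_) zero_le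
  have hex : ∀ x, ∃ r, 0 < r ∧ r ≤ δ ∧ (x ∈ F → μ (closedBall x r) = 0) := by
    intro x
    by_cases hx : x ∈ F
    · have := hF hx
      simp only [measSupport, mem_compl_iff, mem_setOf_eq, not_forall, not_lt,
        nonpos_iff_eq_zero] at this
      obtain ⟨r, hr, h0⟩ := this
      refine ⟨min (r / 2) δ, lt_min (by positivity) hδ, min_le_right _ _, fun _ => ?_⟩
      refine measure_mono_null (closedBall_subset_ball ?_) h0
      exact (min_le_left _ _).trans_lt (by linarith)
    · exact ⟨δ, hδ, le_rfl, fun h => absurd h hx⟩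
  choose r hr0 hrδ hr using hex
  obtain ⟨s, hsF, hsc, hs⟩ := countable_cover_nhdsWithin (f := fun x => closedBall x (r x)) (s := F)
    (fun x _ => mem_nhdsWithin_of_mem_nhds (closedBall_mem_nhds x (hr0 x)))
  have : Countable s := hsc
  refine (hlp_Hd_le μ q ξ hξ hδ (ι := s) (fun x => x) (fun x => r x) (fun x => hsF x.2)
    (fun x => (diam_closedBall (hr0 x).le).trans (by linarith [hrδ x]))
    (by rwa [biUnion_eq_iUnion] at hs)).trans ?_
  rw [nonpos_iff_eq_zero, ENNReal.tsum_eq_zero]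
  intro x
  simp [ballWeight, hr x (hsF x.2), epow, not_le.2 hq, ENNReal.zero_rpow_of_pos hq]

lemma hlp_xi (ξ : Set X → ℝ≥0∞) (K : ℝ≥0)
    (hK : ∀ (x : X) (r : ℝ), 0 < r → r ≤ 1 →
      ξ (closedBall x (2 * r)) ≤ (K : ℝ≥0∞) * ξ (closedBall x r)) (x : X) (r : ℝ)
    (hr : 0 < r) (hr1 : r ≤ 1 / 8) : ξ (closedBall x (16 * r)) ≤ (K ^ 4 : ℝ≥0) * ξ (closedBall x r) := by
  have h1 := hK x r hr (by linarith)
  have h2 := hK x (2 * r) (by linarith) (by linarith)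
  have h3 := hK x (2 * (2 * r)) (by linarith) (by linarith)
  have h4 := hK x (2 * (2 * (2 * r))) (by linarith) (by linarith)
  rw [show 16 * r = 2 * (2 * (2 * (2 * r))) by ring]
  calc _ ≤ _ := h4
    _ ≤ (K : ℝ≥0∞) * (K * (K * (K * ξ (closedBall x r)))) := by gcongr; exact h3.trans (by gcongr; exact h2.trans (by gcongr))
    _ = _ := by push_cast; ring

lemma hlp_mu (μ : Measure X) [IsProbabilityMeasure μ] (hμ : MeasureBlanketed μ) :
    ∃ (D : ℝ≥0) (δ₁ : ℝ), 1 ≤ D ∧ 0 < δ₁ ∧ ∀ x ∈ measSupport μ, ∀ r, 0 < r → r ≤ δ₁ →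
      μ (closedBall x (16 * r)) ≤ D * μ (closedBall x r) := by
  obtain ⟨a, ha, hlim⟩ := hμ
  obtain ⟨m, hm1, hm2⟩ := exists_between hlim
  have hev := eventually_lt_of_limsup_lt hm1
  obtain ⟨r₀, hr₀, hr⟩ := mem_nhdsGT_iff_exists_Ioo_subset.1 hev
  have hr₀' : 0 < r₀ := hr₀
  obtain ⟨n, hn⟩ := pow_unbounded_of_one_lt 16 ha
  have hstep : ∀ x ∈ measSupport μ, ∀ r, 0 < r → r < r₀ →
      μ (closedBall x (a * r)) ≤ m * μ (closedBall x r) := by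
    intro x hx r h0 h1
    have h2 : (⨆ x ∈ measSupport μ, μ (closedBall x (a * r)) / μ (closedBall x r)) < m := hr ⟨h0, h1⟩
    have h3 := (le_iSup₂ (f := fun x (_ : x ∈ measSupport μ) =>
      μ (closedBall x (a * r)) / μ (closedBall x r)) x hx).trans h2.le
    have hpos : μ (closedBall x r) ≠ 0 :=
      ((hx r h0).trans_le (measure_mono ball_subset_closedBall)).ne'
    exact (ENNReal.div_le_iff_le_mul (Or.inl hpos) (Or.inl (measure_ne_top _ _))).1 h3
  have hiter : ∀ k, k ≤ n → ∀ x ∈ measSupport μ, ∀ r, 0 < r → r < r₀ / a ^ n →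
      μ (closedBall x (a ^ k * r)) ≤ m ^ k * μ (closedBall x r) := by
    intro k
    induction k with
    | zero => intro _ x _ r _ _; simp
    | succ k ih =>
      intro hk x hx r h0 h1
      have hpk : 0 < a ^ k := by positivity
      have h2 : a ^ k * r < r₀ := by
        rw [lt_div_iff₀ (by positivity)] at h1
        have : a ^ k ≤ a ^ n := pow_le_pow_right₀ ha.le (by omega)
        nlinarith
      rw [pow_succ', mul_assoc, pow_succ', mul_assoc]
      refine (hstep x hx _ (by positivity) h2).trans ?_
      gcongr
      exact ih (by omega) x hx r h0 h1
  have hmt : m ≠ ∞ := hm2.ne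
  refine ⟨max 1 (m.toNNReal ^ n), r₀ / a ^ n / 2, le_max_left _ _, by positivity, ?_⟩
  intro x hx r h0 h1
  have hp : 0 < r₀ / a ^ n := by positivity
  calc μ (closedBall x (16 * r)) ≤ μ (closedBall x (a ^ n * r)) :=
        measure_mono (closedBall_subset_closedBall (by gcongr))
    _ ≤ m ^ n * μ (closedBall x r) := hiter n le_rfl x hx r h0 (by linarith)
    _ ≤ _ := by
      gcongr
      rw [← ENNReal.coe_toNNReal hmt, ← ENNReal.coe_pow]
      exact ENNReal.coe_le_coe.2 (le_max_right _ _)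

lemma hlp_DW (μ : Measure X) [IsProbabilityMeasure μ] (hμ : MeasureBlanketed μ)
    (q : ℝ) (ξ : Set X → ℝ≥0∞) (hξ : IsPremeasure ξ) (hξD : PremeasureBlanketed ξ)
    (E : Set X) (hE : q ≤ 0 ∨ E ⊆ measSupport μ) :
    ∃ (C : ℝ≥0) (δ₀ : ℝ), 1 ≤ C ∧ 0 < δ₀ ∧ hlpDW μ q ξ E C δ₀ := by
  obtain ⟨K, hK1, hK⟩ := hξD
  obtain ⟨D, δ₁, hD, hδ₁, hDμ⟩ := hlp_mu μ hμ
  have hDq : ∃ A : ℝ≥0, 1 ≤ A ∧ ∀ x ∈ E, ∀ r, 0 < r → r ≤ δ₁ → ∀ y, dist y x ≤ 5 * r →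
      epow (μ (closedBall y (10 * r))) q ≤ A * epow (μ (closedBall x r)) q := by
    rcases le_or_gt q 0 with hq | hq
    · refine ⟨1, le_rfl, fun x _ r hr _ y hy => ?_⟩
      have hsub : μ (closedBall x r) ≤ μ (closedBall y (10 * r)) := by
        refine measure_mono (closedBall_subset_closedBall' ?_)
        rw [dist_comm]; linarith
      rw [ENNReal.coe_one, one_mul]
      unfold epow
      by_cases h0 : μ (closedBall x r) = 0
      · rw [if_pos (show μ (closedBall x r) = 0 ∧ q ≤ 0 from ⟨h0, hq⟩)]; exact le_top
      · have h0' : μ (closedBall y (10 * r)) ≠ 0 := fun h => h0 (le_antisymm (h ▸ hsub) zero_le)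
        rw [if_neg (fun h => h0' h.1), if_neg (fun h => h0 h.1)]
        rw [← neg_neg q, ENNReal.rpow_neg, ENNReal.rpow_neg _ (-q), ENNReal.inv_le_inv]
        exact ENNReal.rpow_le_rpow hsub (by linarith)
    · refine ⟨D ^ q, NNReal.one_le_rpow hD hq.le, fun x hx r hr hr1 y hy => ?_⟩
      have hxs := (hE.resolve_left (not_le.2 hq)) hx
      have hsub : μ (closedBall y (10 * r)) ≤ D * μ (closedBall x r) := by
        refine le_trans (measure_mono (closedBall_subset_closedBall' ?_)) (hDμ x hxs r hr hr1)
        linarith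
      unfold epow
      rw [if_neg (fun h => not_le.2 hq h.2), if_neg (fun h => not_le.2 hq h.2)]
      rw [ENNReal.coe_rpow_of_nonneg _ hq.le, ← ENNReal.mul_rpow_of_nonneg _ _ hq.le]
      exact ENNReal.rpow_le_rpow hsub hq.le
  obtain ⟨A, hA1, hA⟩ := hDq
  have hC : 1 ≤ A * K ^ 4 := one_le_mul hA1 (one_le_pow₀ hK1.le)
  refine ⟨A * K ^ 4, min δ₁ (1 / 8), hC, lt_min hδ₁ (by norm_num), ?_⟩
  intro x hx r hr0 hr y hy
  rcases hr0.eq_or_lt with rfl | hr0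
  · have : y = x := dist_le_zero.1 (by simpa using hy)
    subst this
    rw [mul_zero]
    exact le_mul_of_one_le_left zero_le (by exact_mod_cast hC)
  · have h1 := hA x hx r hr0 (hr.trans (min_le_left _ _)) y hy
    have h2 : ξ (closedBall y (10 * r)) ≤ (K ^ 4 : ℝ≥0) * ξ (closedBall x r) :=
      (hξ.2 _ _ _ _ (closedBall_subset_closedBall' (by linarith))).trans
        (hlp_xi ξ K hK x r hr0 (hr.trans (min_le_right _ _)))
    unfold ballWeight
    calc _ ≤ (A * epow (μ (closedBall x r)) q) * ((K ^ 4 : ℝ≥0) * ξ (closedBall x r)) :=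
          mul_le_mul' h1 h2
      _ = _ := by push_cast; ring

end Helpers

section Thms

variable [MetricSpace X] [SeparableSpace X] [MeasurableSpace X] [BorelSpace X]
variable [MetricSpace X'] [SeparableSpace X'] [MeasurableSpace X'] [BorelSpace X']

theorem stmt1 (μ : Measure X) [IsProbabilityMeasure μ] (hμ : MeasureBlanketed μ)
    (q : ℝ) (ξ : Set X → ℝ≥0∞) (hξ : IsPremeasure ξ) (hξD : PremeasureBlanketed ξ)
    (E : Set X) :
    WM μ q ξ E = HM μ q ξ E := by
  refine le_antisymm (hlp_W_le_H μ q ξ E) ?_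
  rcases le_or_gt q 0 with hq | hq
  · obtain ⟨C, δ₀, hC, hδ₀, hDW⟩ := hlp_DW μ hμ q ξ hξ hξD E (Or.inl hq)
    exact hlp_main μ q ξ hξ hC hδ₀ hDW
  · obtain ⟨C, δ₀, hC, hδ₀, hDW⟩ := hlp_DW μ hμ q ξ hξ hξD (E ∩ measSupport μ)
      (Or.inr inter_subset_right)
    have h1 := hlp_main μ q ξ hξ hC hδ₀ hDW
    have h2 : HM μ q ξ E ≤ HM μ q ξ (E ∩ measSupport μ) + HM μ q ξ (measSupport μ)ᶜ := by
      refine (hlp_HM_mono μ q ξ (E' := (E ∩ measSupport μ) ∪ (measSupport μ)ᶜ) ?_).trans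
        (measure_union_le (μ := hlpOM μ q ξ hξ) _ _)
      intro x hx
      by_cases hxs : x ∈ measSupport μ
      · exact Or.inl ⟨hx, hxs⟩
      · exact Or.inr hxs
    rw [hlp_off_support μ q hq ξ hξ, add_zero] at h2
    refine h2.trans (h1.trans ?_)
    exact iSup₂_le fun F hF => le_iSup₂ (f := fun (F : Set X) (_ : F ⊆ E) => W0 μ q ξ F) F
      (hF.trans inter_subset_left)

end Thms
end
end

section
/- Let (X,ρ) be a separable metric space, q ∈ ℝ, ξ ∈ Φ_D a blanketed premeasure, ε > 0, and μ a blanketed Borel probability measure on X. Assume H^{q,ξ}_μ(X) < ∞. Let Λ^{q,ξ}_{μ,ε} = { x ∈ X : ∃ δ_x > 0 such that H^{q,ξ}_μ(B(x,r)) ≤ (1+ε) μ(B(x,r))^q ξ(B(x,r)) for all r ≤ δ_x }. Then H^{q,ξ}_μ(X) = H^{q,ξ}_μ(Λ^{q,ξ}_{μ,ε}). -/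
open Metric MeasureTheory Set Filter TopologicalSpace
open scoped ENNReal NNReal Classical

noncomputable section

variable {X X' : Type*}

section Helpers

variable [MetricSpace X] [MeasurableSpace X]
variable {μ : Measure X} {q : ℝ} {ξ : Set X → ℝ≥0∞}

/-- Weight of a ball encoded as a pair. -/
def pw (μ : Measure X) (q : ℝ) (ξ : Set X → ℝ≥0∞) (p : X × ℝ) : ℝ≥0∞ :=
  ballWeight μ q ξ (closedBall p.1 p.2)

/-- Covers encoded as countable sets of pairs. -/
def IsCov (E : Set X) (δ : ℝ) (S : Set (X × ℝ)) : Prop :=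
  S.Countable ∧ (∀ p ∈ S, p.1 ∈ E ∧ diam (closedBall p.1 p.2) ≤ 2 * δ) ∧
    E ⊆ ⋃ p ∈ S, closedBall p.1 p.2

lemma pw_neg (h0 : ξ ∅ = 0) (x : X) : pw μ q ξ (x, -1) = 0 := by
  simp [pw, ballWeight, h0]

lemma Hd_le (h0 : ξ ∅ = 0) {E : Set X} {δ : ℝ} (hδ : 0 < δ) {S : Set (X × ℝ)}
    (hS : IsCov E δ S) : Hd μ q ξ δ E ≤ ∑' p : S, pw μ q ξ p := by
  unfold Hd
  split_ifs with hE
  · exact zero_le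
  obtain ⟨x0, hx0⟩ := nonempty_iff_ne_empty.2 hE
  obtain ⟨hc, hS1, hS2⟩ := hS
  have : Countable S := hc.to_subtype
  obtain ⟨f, hf⟩ := exists_injective_nat S
  let g : ℕ → X × ℝ := Function.extend f (fun p => (p : X × ℝ)) (fun _ => (x0, -1))
  have hg : ∀ p : S, g (f p) = p := fun p => hf.extend_apply _ _ p
  have hg' : ∀ n, (¬ ∃ p, f p = n) → g n = (x0, -1) := fun n hn =>
    Function.extend_apply' _ _ _ hn
  have hem : closedBall x0 (-1 : ℝ) = ∅ := closedBall_eq_empty.2 (by norm_num)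
  refine iInf_le_of_le (fun n => (g n).1) (iInf_le_of_le (fun n => (g n).2)
    (iInf_le_of_le ⟨?_, ?_, ?_⟩ ?_))
  · intro n
    by_cases hn : ∃ p, f p = n
    · obtain ⟨p, rfl⟩ := hn
      simp only [hg]; exact (hS1 p p.2).1
    · simpa [hg' n hn] using hx0
  · intro n
    by_cases hn : ∃ p, f p = n
    · obtain ⟨p, rfl⟩ := hn
      simp only [hg]; exact (hS1 p p.2).2
    · simp only [hg' n hn, hem, diam_empty]; positivity
  · intro x hx
    obtain ⟨p, hp, hxp⟩ := mem_iUnion₂.1 (hS2 hx)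
    refine mem_iUnion.2 ⟨f ⟨p, hp⟩, ?_⟩
    simpa only [hg] using hxp
  · rw [← tsum_extend_zero hf (fun p : S => pw μ q ξ p)]
    refine ENNReal.tsum_le_tsum fun n => ?_
    by_cases hn : ∃ p, f p = n
    · obtain ⟨p, rfl⟩ := hn
      rw [hf.extend_apply]
      simp only [hg]; exact le_rfl
    · rw [Function.extend_apply' _ _ _ hn]
      change pw μ q ξ (g n) ≤ _
      rw [hg' n hn, pw_neg h0]; exact zero_le

lemma Hd_le_index (h0 : ξ ∅ = 0) {E : Set X} {δ : ℝ} (hδ : 0 < δ) {ι : Type*} [Countable ι]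
    (g : ι → X × ℝ) (h1 : ∀ i, (g i).1 ∈ E) (h2 : ∀ i, diam (closedBall (g i).1 (g i).2) ≤ 2 * δ)
    (h3 : E ⊆ ⋃ i, closedBall (g i).1 (g i).2) :
    Hd μ q ξ δ E ≤ ∑' i, pw μ q ξ (g i) := by
  have hS : IsCov E δ (⋃ i, {g i}) := by
    refine ⟨countable_iUnion fun i => countable_singleton _, ?_, ?_⟩
    · intro p hp
      obtain ⟨i, hi⟩ := mem_iUnion.1 hp
      rw [mem_singleton_iff.1 hi]
      exact ⟨h1 i, h2 i⟩
    · intro x hx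
      obtain ⟨i, hi⟩ := mem_iUnion.1 (h3 hx)
      exact mem_iUnion₂.2 ⟨g i, mem_iUnion.2 ⟨i, rfl⟩, hi⟩
  refine (Hd_le h0 hδ hS).trans ((ENNReal.tsum_iUnion_le_tsum _ _).trans ?_)
  refine ENNReal.tsum_le_tsum fun i => ?_
  rw [tsum_singleton (g i) (pw μ q ξ)]

lemma exists_cov {E : Set X} {δ : ℝ} {t : ℝ≥0∞} (h : Hd μ q ξ δ E < t) :
    ∃ S, IsCov E δ S ∧ ∑' p : S, pw μ q ξ p < t := by
  unfold Hd at h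
  split_ifs at h with hE
  · refine ⟨∅, ⟨countable_empty, by simp, by simp [hE]⟩, ?_⟩
    simpa using h
  · simp only [iInf_lt_iff] at h
    obtain ⟨c, r, ⟨h1, h2, h3⟩, h⟩ := h
    refine ⟨⋃ i, {(c i, r i)}, ⟨countable_iUnion fun i => countable_singleton _, ?_, ?_⟩, ?_⟩
    · intro p hp
      obtain ⟨i, hi⟩ := mem_iUnion.1 hp
      rw [mem_singleton_iff.1 hi]
      exact ⟨h1 i, h2 i⟩
    · intro x hx
      obtain ⟨i, hi⟩ := mem_iUnion.1 (h3 hx)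
      exact mem_iUnion₂.2 ⟨(c i, r i), mem_iUnion.2 ⟨i, rfl⟩, hi⟩
    · refine lt_of_le_of_lt ((ENNReal.tsum_iUnion_le_tsum _ _).trans ?_) h
      refine ENNReal.tsum_le_tsum fun i => ?_
      rw [tsum_singleton (c i, r i) (pw μ q ξ)]
      rfl

lemma Hd_anti (h0 : ξ ∅ = 0) {E : Set X} {δ δ' : ℝ} (hδ : 0 < δ) (h : δ ≤ δ') :
    Hd μ q ξ δ' E ≤ Hd μ q ξ δ E := by
  refine le_of_forall_gt fun t ht => ?_
  obtain ⟨S, ⟨h1, h2, h3⟩, hS⟩ := exists_cov ht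
  exact (Hd_le h0 (hδ.trans_le h)
    ⟨h1, fun p hp => ⟨(h2 p hp).1, (h2 p hp).2.trans (by linarith)⟩, h3⟩).trans_lt hS

lemma Hd_iUnion (h0 : ξ ∅ = 0) {δ : ℝ} (hδ : 0 < δ) {ι : Type*} [Countable ι] (E : ι → Set X) :
    Hd μ q ξ δ (⋃ i, E i) ≤ ∑' i, Hd μ q ξ δ (E i) := by
  by_cases htop : ∑' i, Hd μ q ξ δ (E i) = ∞
  · rw [htop]; exact le_top
  refine ENNReal.le_of_forall_pos_le_add fun e he _ => ?_
  obtain ⟨e', he', hsum⟩ := ENNReal.exists_pos_sum_of_countable (ENNReal.coe_pos.2 he).ne' ι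
  have hfin := ENNReal.ne_top_of_tsum_ne_top htop
  have : ∀ i, ∃ S, IsCov (E i) δ S ∧ ∑' p : S, pw μ q ξ p < Hd μ q ξ δ (E i) + e' i := fun i =>
    exists_cov (ENNReal.lt_add_right (hfin i) (ENNReal.coe_pos.2 (he' i)).ne')
  choose S hS hSs using this
  have hU : IsCov (⋃ i, E i) δ (⋃ i, S i) := by
    refine ⟨countable_iUnion fun i => (hS i).1, ?_, ?_⟩
    · intro p hp
      obtain ⟨i, hi⟩ := mem_iUnion.1 hp
      exact ⟨mem_iUnion.2 ⟨i, ((hS i).2.1 p hi).1⟩, ((hS i).2.1 p hi).2⟩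
    · intro x hx
      obtain ⟨i, hi⟩ := mem_iUnion.1 hx
      obtain ⟨p, hp, hxp⟩ := mem_iUnion₂.1 ((hS i).2.2 hi)
      exact mem_iUnion₂.2 ⟨p, mem_iUnion.2 ⟨i, hp⟩, hxp⟩
  refine (Hd_le h0 hδ hU).trans ((ENNReal.tsum_iUnion_le_tsum _ _).trans ?_)
  refine (ENNReal.tsum_le_tsum fun i => (hSs i).le).trans ?_
  rw [ENNReal.tsum_add]
  gcongr

lemma Hd_le_HM {δ : ℝ} (hδ : 0 < δ) {F E : Set X} (h : F ⊆ E) : Hd μ q ξ δ F ≤ HM μ q ξ E :=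
  le_iSup₂_of_le (f := fun F (_ : F ⊆ E) => H0 μ q ξ F) F h
    (le_iSup₂_of_le (f := fun δ (_ : 0 < δ) => Hd μ q ξ δ F) δ hδ le_rfl)

lemma HM_le {E : Set X} {t : ℝ≥0∞} (h : ∀ F ⊆ E, ∀ δ, 0 < δ → Hd μ q ξ δ F ≤ t) :
    HM μ q ξ E ≤ t :=
  iSup₂_le fun F hF => iSup₂_le fun δ hδ => h F hF δ hδ

lemma lt_HM {E : Set X} {t : ℝ≥0∞} (h : t < HM μ q ξ E) :
    ∃ F ⊆ E, ∃ δ, 0 < δ ∧ t < Hd μ q ξ δ F := by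
  by_contra! hc
  exact absurd (HM_le (fun F hF δ hδ => hc F hF δ hδ)) (not_le.2 h)

/-- The outer measure. -/
def HOM (μ : Measure X) (q : ℝ) (ξ : Set X → ℝ≥0∞) (h0 : ξ ∅ = 0) : OuterMeasure X where
  measureOf := HM μ q ξ
  empty := by
    refine le_antisymm (HM_le fun F hF δ _ => ?_) zero_le
    simp [Hd, subset_empty_iff.1 hF]
  mono := fun h => HM_le fun _ hF _ hδ => Hd_le_HM hδ (hF.trans h)
  iUnion_nat := fun s _ => HM_le fun F hF δ hδ => by
    have : F = ⋃ i, F ∩ s i := by rw [← inter_iUnion, inter_eq_left.2 hF]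
    rw [this]
    exact (Hd_iUnion h0 hδ _).trans
      (ENNReal.tsum_le_tsum fun i => Hd_le_HM hδ inter_subset_right)

lemma HOM_apply (h0 : ξ ∅ = 0) (s : Set X) : HOM μ q ξ h0 s = HM μ q ξ s := rfl

lemma HOM_metric (h0 : ξ ∅ = 0) : (HOM μ q ξ h0).IsMetric := by
  rintro s t ⟨d, hd0, hd⟩
  refine le_antisymm (measure_union_le _ _) ?_
  simp only [HOM_apply]
  rcases eq_or_ne (HM μ q ξ (s ∪ t)) ∞ with htop | htop
  · rw [htop]; exact le_top
  refine le_of_forall_lt fun b hb => ?_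
  have hsm : HM μ q ξ s ≤ HM μ q ξ (s ∪ t) := (HOM μ q ξ h0).mono subset_union_left
  have htm : HM μ q ξ t ≤ HM μ q ξ (s ∪ t) := (HOM μ q ξ h0).mono subset_union_right
  -- key inequality
  have key : ∀ F ⊆ s, ∀ G ⊆ t, ∀ δ, 0 < δ → ∀ δ', 0 < δ' →
      Hd μ q ξ δ F + Hd μ q ξ δ' G ≤ HM μ q ξ (s ∪ t) := by
    intro F hF G hG δ hδ δ' hδ'
    obtain ⟨d', hd'0, hd'⟩ : ∃ d' : ℝ, 0 < d' ∧ ENNReal.ofReal d' ≤ d := by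
      rcases eq_or_ne d ∞ with rfl | hdt
      · exact ⟨1, one_pos, le_top⟩
      · exact ⟨d.toReal, ENNReal.toReal_pos hd0 hdt, ENNReal.ofReal_toReal_le⟩
    have hdd : ∀ x ∈ s, ∀ y ∈ t, d' ≤ dist x y := by
      intro x hx y hy
      have := hd'.trans (hd x hx y hy)
      rw [edist_dist] at this
      exact (ENNReal.ofReal_le_ofReal_iff dist_nonneg).1 this
    set e := min (d' / 4) (min δ δ') with he
    have he0 : 0 < e := by positivity
    have he1 : 2 * e < d' := by
      have : e ≤ d' / 4 := min_le_left _ _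
      linarith
    have heδ : e ≤ δ := (min_le_right _ _).trans (min_le_left _ _)
    have heδ' : e ≤ δ' := (min_le_right _ _).trans (min_le_right _ _)
    refine le_trans ?_ (Hd_le_HM he0 (union_subset_union hF hG))
    refine le_of_forall_gt fun u hu => ?_
    obtain ⟨S, ⟨hSc, hS1, hS2⟩, hSu⟩ := exists_cov hu
    refine lt_of_le_of_lt ?_ hSu
    have hclose : ∀ p ∈ S, ∀ y ∈ closedBall p.1 p.2, dist p.1 y ≤ 2 * e := by
      intro p hp y hy
      refine le_trans (dist_le_diam_of_mem isBounded_closedBall ?_ hy) (hS1 p hp).2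
      exact mem_closedBall_self (dist_nonneg.trans (mem_closedBall.1 hy))
    have cF : IsCov F δ {p ∈ S | p.1 ∈ s} := by
      refine ⟨hSc.mono (sep_subset _ _), ?_, ?_⟩
      · rintro p ⟨hp, hps⟩
        refine ⟨?_, (hS1 p hp).2.trans (by linarith)⟩
        rcases (hS1 p hp).1 with h | h
        · exact h
        · exfalso
          have := hdd _ hps _ (hG h)
          rw [dist_self] at this; linarith
      · intro x hx
        obtain ⟨p, hp, hxp⟩ := mem_iUnion₂.1 (hS2 (Or.inl hx))
        refine mem_iUnion₂.2 ⟨p, ⟨hp, ?_⟩, hxp⟩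
        rcases (hS1 p hp).1 with h | h
        · exact hF h
        · exfalso
          have := hdd _ (hF hx) _ (hG h)
          have h2 := hclose p hp x hxp
          rw [dist_comm] at h2; linarith
    have cG : IsCov G δ' {p ∈ S | p.1 ∉ s} := by
      refine ⟨hSc.mono (sep_subset _ _), ?_, ?_⟩
      · rintro p ⟨hp, hps⟩
        refine ⟨?_, (hS1 p hp).2.trans (by linarith)⟩
        rcases (hS1 p hp).1 with h | h
        · exact absurd (hF h) hps
        · exact h
      · intro x hx
        obtain ⟨p, hp, hxp⟩ := mem_iUnion₂.1 (hS2 (Or.inr hx))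
        refine mem_iUnion₂.2 ⟨p, ⟨hp, ?_⟩, hxp⟩
        intro h
        have := hdd _ h _ (hG hx)
        have h2 := hclose p hp x hxp
        linarith
    refine (add_le_add (Hd_le h0 hδ cF) (Hd_le h0 hδ' cG)).trans (le_of_eq ?_)
    have hdis : Disjoint {p ∈ S | p.1 ∈ s} {p ∈ S | p.1 ∉ s} := by
      rw [Set.disjoint_left]; rintro p ⟨_, h⟩ ⟨_, h'⟩; exact h' h
    rw [← ENNReal.summable.tsum_union_disjoint hdis ENNReal.summable]
    have : {p ∈ S | p.1 ∈ s} ∪ {p ∈ S | p.1 ∉ s} = S := by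
      ext p; simp only [mem_union, mem_setOf_eq]; tauto
    rw [this]
  refine hb.trans_le ?_
  have h1 : ∀ F ⊆ s, ∀ δ, 0 < δ → Hd μ q ξ δ F + HM μ q ξ t ≤ HM μ q ξ (s ∪ t) := by
    intro F hF δ hδ
    have hf : Hd μ q ξ δ F ≤ HM μ q ξ (s ∪ t) := (Hd_le_HM hδ hF).trans hsm
    refine (ENNReal.le_sub_iff_add_le_left ?_ hf).1 (HM_le fun G hG δ' hδ' => ?_)
    · exact ne_top_of_le_ne_top htop hf
    · exact (ENNReal.le_sub_iff_add_le_left (ne_top_of_le_ne_top htop hf) hf).2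
        (key F hF G hG δ hδ δ' hδ')
  refine (ENNReal.le_sub_iff_add_le_right (ne_top_of_le_ne_top htop htm) htm).1
    (HM_le fun F hF δ hδ => ?_)
  exact (ENNReal.le_sub_iff_add_le_right (ne_top_of_le_ne_top htop htm) htm).2 (h1 F hF δ hδ)


lemma epow_anti {a b : ℝ≥0∞} (hq : q ≤ 0) (h : a ≤ b) : epow b q ≤ epow a q := by
  unfold epow
  by_cases ha : a = 0
  · rw [if_pos (show a = 0 ∧ q ≤ 0 from ⟨ha, hq⟩)]; exact le_top
  · have hb : b ≠ 0 := fun hb => ha (le_antisymm (hb ▸ h) zero_le)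
    rw [if_neg (fun h => hb h.1), if_neg (fun h => ha h.1)]
    obtain ⟨p, rfl⟩ : ∃ p, q = -p := ⟨-q, by ring⟩
    rw [ENNReal.rpow_neg, ENNReal.rpow_neg]
    exact ENNReal.inv_le_inv.2 (ENNReal.rpow_le_rpow h (by linarith))

lemma xi_double (hξ : IsPremeasure ξ) (hξD : PremeasureBlanketed ξ) :
    ∃ C : ℝ≥0∞, C ≠ ∞ ∧ ∀ x : X, ∀ r : ℝ, 0 < r → r ≤ 1 / 8 → ∀ y ∈ closedBall x (5 * r),
      ξ (closedBall y (10 * r)) ≤ C * ξ (closedBall x r) := by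
  obtain ⟨K, _, hK⟩ := hξD
  refine ⟨(K : ℝ≥0∞) * (K * (K * K)), by finiteness, ?_⟩
  intro x r hr hr1 y hy
  have hsub : closedBall y (10 * r) ⊆ closedBall x (2 * (2 * (2 * (2 * r)))) := by
    refine closedBall_subset_closedBall' ?_
    have := mem_closedBall.1 hy
    linarith
  calc ξ (closedBall y (10 * r)) ≤ _ := hξ.2 _ _ _ _ hsub
    _ ≤ _ := hK x _ (by positivity) (by linarith)
    _ ≤ K * (K * ξ (closedBall x (2 * (2 * r)))) := by
        gcongr; exact hK x _ (by positivity) (by linarith)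
    _ ≤ K * (K * (K * ξ (closedBall x (2 * r)))) := by
        gcongr; exact hK x _ (by positivity) (by linarith)
    _ ≤ K * (K * (K * (K * ξ (closedBall x r)))) := by
        gcongr; exact hK x _ (by positivity) (by linarith)
    _ = _ := by ring

lemma mu_double [IsFiniteMeasure μ] (hμ : MeasureBlanketed μ) :
    ∃ C : ℝ≥0∞, C ≠ ∞ ∧ ∃ r0 : ℝ, 0 < r0 ∧ ∀ x ∈ measSupport μ, ∀ r : ℝ, 0 < r → r ≤ r0 →
      μ (closedBall x (16 * r)) ≤ C * μ (closedBall x r) := by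
  obtain ⟨a, ha, hlim⟩ := hμ
  obtain ⟨M, hM1, hM2⟩ := exists_between hlim
  have hev := eventually_lt_of_limsup_lt hM1
  obtain ⟨s, hs, hs'⟩ := (mem_nhdsGT_iff_exists_Ioo_subset).1 hev
  have hstep : ∀ x ∈ measSupport μ, ∀ r, 0 < r → r < s →
      μ (closedBall x (a * r)) ≤ M * μ (closedBall x r) := by
    intro x hx r hr hrs
    have h1 : (⨆ x ∈ measSupport μ, μ (closedBall x (a * r)) / μ (closedBall x r)) < M :=
      hs' ⟨hr, hrs⟩
    have h2 : μ (closedBall x (a * r)) / μ (closedBall x r) ≤ M :=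
      (le_iSup₂ (f := fun x (_ : x ∈ measSupport μ) =>
        μ (closedBall x (a * r)) / μ (closedBall x r)) x hx).trans h1.le
    have hpos : μ (closedBall x r) ≠ 0 :=
      ((hx r hr).trans_le (measure_mono ball_subset_closedBall)).ne'
    exact (ENNReal.div_le_iff hpos (measure_ne_top _ _)).1 h2
  obtain ⟨k, hk⟩ := pow_unbounded_of_one_lt (16 : ℝ) ha
  have ha0 : 0 < a := one_pos.trans ha
  have hs0 : 0 < s := hs
  refine ⟨M ^ k, ENNReal.pow_ne_top hM2.ne, s / (2 * a ^ k), by positivity, ?_⟩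
  intro x hx r hr hr0
  have hrk : a ^ k * r < s := by
    have : r * (2 * a ^ k) ≤ s := (le_div_iff₀ (by positivity)).1 hr0
    nlinarith
  have hind : ∀ n ≤ k, μ (closedBall x (a ^ n * r)) ≤ M ^ n * μ (closedBall x r) := by
    intro n
    induction n with
    | zero => intro _; simp
    | succ n ih =>
      intro hn
      have hle : a ^ n * r ≤ a ^ k * r := by
        gcongr
        · exact ha.le
        · omega
      have := hstep x hx (a ^ n * r) (by positivity) (hle.trans_lt hrk)
      rw [pow_succ' a, mul_assoc, pow_succ' M, mul_assoc]
      exact this.trans (by gcongr; exact ih (by omega))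
  refine le_trans (measure_mono (closedBall_subset_closedBall ?_)) (hind k le_rfl)
  gcongr

lemma HM_supp_compl [SeparableSpace X] (h0 : ξ ∅ = 0) (hq : 0 < q) :
    HM μ q ξ (measSupport μ)ᶜ = 0 := by
  have : SecondCountableTopology X := UniformSpace.secondCountable_of_separable X
  refine le_antisymm (HM_le fun F hF δ hδ => ?_) zero_le
  have : ∀ x ∈ F, ∃ r, 0 < r ∧ r ≤ δ ∧ μ (closedBall x r) = 0 := by
    intro x hx
    have := hF hx
    simp only [measSupport, mem_compl_iff, mem_setOf_eq, not_forall, not_lt] at this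
    obtain ⟨r, hr, h⟩ := this
    refine ⟨min (r / 2) δ, by positivity, min_le_right _ _, ?_⟩
    refine measure_mono_null (closedBall_subset_ball ?_) (le_antisymm h zero_le)
    exact (min_le_left _ _).trans_lt (by linarith)
  choose! r hr hrδ hr0 using this
  obtain ⟨t, htF, htc, ht⟩ := countable_cover_nhdsWithin (f := fun x => closedBall x (r x)) (s := F)
    (fun x hx => mem_nhdsWithin_of_mem_nhds (closedBall_mem_nhds x (hr x hx)))
  have := htc.to_subtype
  refine (Hd_le_index h0 hδ (fun x : t => ((x : X), r x)) (fun x => htF x.2) ?_ ?_).trans ?_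
  · intro x
    have := hrδ x (htF x.2)
    exact (diam_closedBall (hr x (htF x.2)).le).trans (by simpa using this)
  · simpa [iUnion_subtype] using ht
  · refine le_of_eq (ENNReal.tsum_eq_zero.2 fun x => ?_)
    simp only [pw, ballWeight, hr0 x (htF x.2), epow]
    rw [if_neg (by simp [hq]), ENNReal.zero_rpow_of_pos hq, zero_mul]

lemma exists_T [SeparableSpace X] [IsFiniteMeasure μ] (hμ : MeasureBlanketed μ)
    (hξ : IsPremeasure ξ) (hξD : PremeasureBlanketed ξ) :
    ∃ T : Set X, HM μ q ξ Tᶜ = 0 ∧ ∃ C : ℝ≥0∞, C ≠ ∞ ∧ ∃ r0 : ℝ, 0 < r0 ∧ ∀ x ∈ T, ∀ r : ℝ,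
      0 < r → r ≤ r0 → ∀ y ∈ closedBall x (5 * r), pw μ q ξ (y, 10 * r) ≤ C * pw μ q ξ (x, r) := by
  obtain ⟨C, hC, hCξ⟩ := xi_double hξ hξD
  rcases le_or_gt q 0 with hq | hq
  · refine ⟨univ, ?_, C, hC, 1 / 8, by norm_num, ?_⟩
    · rw [compl_univ]; exact (HOM μ q ξ hξ.1).empty
    intro x _ r hr hr0 y hy
    have hsub : closedBall x r ⊆ closedBall y (10 * r) := by
      refine closedBall_subset_closedBall' ?_
      have := mem_closedBall'.1 hy
      linarith
    simp only [pw, ballWeight]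
    calc _ ≤ epow (μ (closedBall x r)) q * (C * ξ (closedBall x r)) :=
          mul_le_mul' (epow_anti hq (measure_mono hsub)) (hCξ x r hr hr0 y hy)
      _ = _ := by ring
  · obtain ⟨M, hM, s, hs, hMμ⟩ := mu_double hμ
    refine ⟨measSupport μ, HM_supp_compl hξ.1 hq, M ^ q * C,
      ENNReal.mul_ne_top (ENNReal.rpow_ne_top_of_nonneg hq.le hM) hC, min s (1 / 8),
      by positivity, ?_⟩
    intro x hx r hr hr0 y hy
    have hsub : closedBall y (10 * r) ⊆ closedBall x (16 * r) := by
      refine closedBall_subset_closedBall' ?_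
      have := mem_closedBall.1 hy
      linarith
    have h1 : μ (closedBall y (10 * r)) ^ q ≤ M ^ q * μ (closedBall x r) ^ q := by
      rw [← ENNReal.mul_rpow_of_nonneg _ _ hq.le]
      exact ENNReal.rpow_le_rpow ((measure_mono hsub).trans
        (hMμ x hx r hr (hr0.trans (min_le_left _ _)))) hq.le
    simp only [pw, ballWeight, epow, not_le.2 hq, and_false, if_false]
    calc _ ≤ (M ^ q * μ (closedBall x r) ^ q) * (C * ξ (closedBall x r)) :=
          mul_le_mul' h1 (hCξ x r hr (hr0.trans (min_le_right _ _)) y hy)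
      _ = _ := by ring


lemma step [SeparableSpace X] [BorelSpace X] (h0 : ξ ∅ = 0) {ε : ℝ} (hε : 0 < ε)
    (hfin : HM μ q ξ univ < ∞) {F A : Set X} (hAF : A ⊆ F) {η : ℝ≥0∞} {δ0 : ℝ}
    (hN : HM μ q ξ univ ≤ Hd μ q ξ δ0 F + η)
    (hA : ∀ x ∈ A, ∀ d, 0 < d → ∃ r, 0 < r ∧ r ≤ d ∧
      ENNReal.ofReal (1 + ε) * pw μ q ξ (x, r) ≤ HM μ q ξ (closedBall x r))
    {C : ℝ≥0∞} (hC : C ≠ ∞) {r0 : ℝ}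
    (hdoub : ∀ x ∈ A, ∀ r : ℝ, 0 < r → r ≤ r0 → ∀ y ∈ closedBall x (5 * r),
      pw μ q ξ (y, 10 * r) ≤ C * pw μ q ξ (x, r))
    {δ : ℝ} (hδ : 0 < δ) (hδ0 : δ ≤ δ0) (hδr : δ ≤ r0) :
    ∃ W : Set X, MeasurableSet W ∧ ENNReal.ofReal ε * HM μ q ξ W ≤ ENNReal.ofReal (1 + ε) * η ∧
      ∀ G ⊆ A \ W, Hd μ q ξ (10 * δ) G = 0 := by
  have hcar : ‹MeasurableSpace X› ≤ (HOM μ q ξ h0).caratheodory :=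
    (BorelSpace.measurable_eq (α := X)).le.trans (HOM_metric h0).borel_le_caratheodory
  set m : Measure X := (HOM μ q ξ h0).toMeasure hcar with hm
  have hmap : ∀ s, MeasurableSet s → m s = HM μ q ξ s := fun s hs => toMeasure_apply _ _ hs
  have hmfin : IsFiniteMeasure m := ⟨by rw [hmap _ MeasurableSet.univ]; exact hfin⟩
  let B : X × ℝ → Set X := fun p => closedBall p.1 p.2
  let t : Set (X × ℝ) := {p | p.1 ∈ A ∧ 0 < p.2 ∧ p.2 ≤ δ ∧
      ENNReal.ofReal (1 + ε) * pw μ q ξ p ≤ HM μ q ξ (B p)}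
  obtain ⟨u, hut, hdisj, hcov⟩ := Vitali.exists_disjoint_subfamily_covering_enlargement B t
    (fun p => p.2) 2 one_lt_two (fun p hp => hp.2.1.le) δ (fun p hp => hp.2.2.1)
    (fun p hp => ⟨p.1, mem_closedBall_self hp.2.1.le⟩)
  have huc : u.Countable := hdisj.countable_of_nonempty_interior fun p hp =>
    ⟨p.1, mem_interior_iff_mem_nhds.2 (closedBall_mem_nhds _ (hut hp).2.1)⟩
  have : Countable u := huc.to_subtype
  let W : Set X := ⋃ p ∈ u, B p
  have hWm : MeasurableSet W := MeasurableSet.biUnion huc fun p _ => isClosed_closedBall.measurableSet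
  have hδ00 : 0 < δ0 := hδ.trans_le hδ0
  have hsum : ENNReal.ofReal (1 + ε) * ∑' p : u, pw μ q ξ p ≤ m W := by
    rw [measure_biUnion huc hdisj fun p _ => isClosed_closedBall.measurableSet,
      ← ENNReal.tsum_mul_left]
    refine ENNReal.tsum_le_tsum fun p => ?_
    rw [hmap _ isClosed_closedBall.measurableSet]
    exact (hut p.2).2.2.2
  have hsumfin : ∑' p : u, pw μ q ξ p ≠ ∞ := by
    intro h
    rw [h, ENNReal.mul_top (by simp; linarith)] at hsum
    exact (measure_ne_top m W) (top_le_iff.1 hsum)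
  refine ⟨W, hWm, ?_, ?_⟩
  · have h1 : Hd μ q ξ δ0 (F ∩ W) ≤ ∑' p : u, pw μ q ξ p := by
      refine Hd_le h0 hδ00 ⟨huc, fun p hp => ⟨⟨hAF (hut hp).1, ?_⟩, ?_⟩, inter_subset_right⟩
      · exact mem_iUnion₂.2 ⟨p, hp, mem_closedBall_self (hut hp).2.1.le⟩
      · have := (hut hp).2.2.1
        exact (diam_closedBall (hut hp).2.1.le).trans (by linarith)
    have h2 : Hd μ q ξ δ0 (F ∩ Wᶜ) ≤ m Wᶜ := by
      rw [hmap _ hWm.compl]; exact Hd_le_HM hδ00 inter_subset_right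
    have h3 : Hd μ q ξ δ0 F ≤ Hd μ q ξ δ0 (F ∩ W) + Hd μ q ξ δ0 (F ∩ Wᶜ) := by
      have e : F = ⋃ b : Bool, cond b (F ∩ W) (F ∩ Wᶜ) := by
        rw [← union_eq_iUnion, inter_union_compl]
      have := Hd_iUnion (μ := μ) (q := q) h0 hδ00 (fun b : Bool => cond b (F ∩ W) (F ∩ Wᶜ))
      rw [← e, tsum_bool, add_comm] at this
      exact this
    have h4 : m W + m Wᶜ ≤ ∑' p : u, pw μ q ξ p + m Wᶜ + η := by
      rw [measure_add_measure_compl hWm, hmap _ MeasurableSet.univ]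
      exact hN.trans (by gcongr; exact h3.trans (add_le_add h1 h2))
    have h5 : m W ≤ ∑' p : u, pw μ q ξ p + η := by
      have : m W + m Wᶜ ≤ (∑' p : u, pw μ q ξ p + η) + m Wᶜ := h4.trans (le_of_eq (by ring))
      exact (ENNReal.add_le_add_iff_right (measure_ne_top m _)).1 this
    have h6 : ENNReal.ofReal (1 + ε) * m W ≤ m W + ENNReal.ofReal (1 + ε) * η := by
      calc _ ≤ ENNReal.ofReal (1 + ε) * (∑' p : u, pw μ q ξ p + η) := by gcongr
        _ ≤ _ := by rw [mul_add]; gcongr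
    have h7 : ENNReal.ofReal (1 + ε) * m W = m W + ENNReal.ofReal ε * m W := by
      rw [ENNReal.ofReal_add zero_le_one hε.le, add_mul, ENNReal.ofReal_one, one_mul]
    rw [h7] at h6
    rw [← hmap _ hWm]
    exact (ENNReal.add_le_add_iff_left (measure_ne_top m _)).1 h6
  · intro G hG
    have hbound : ∀ s : Finset u,
        Hd μ q ξ (10 * δ) G ≤ C * ∑' p : {x // x ∉ s}, pw μ q ξ (p : u) := by
      intro s
      let ι := {p : {x // x ∉ s} // (G ∩ closedBall (p : u).1.1 (5 * (p : u).1.2)).Nonempty}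
      choose y hy using fun p : ι => p.2
      have hu' : ∀ p : ι, ((p.1 : u) : X × ℝ) ∈ t := fun p => hut p.1.1.2
      refine (Hd_le_index h0 (by positivity) (fun p : ι => (y p, 10 * (p.1 : u).1.2))
        (fun p => (hy p).1) ?_ ?_).trans ?_
      · intro p
        have h1 := (hu' p).2.1
        have h2 := (hu' p).2.2.1
        exact (diam_closedBall (by positivity)).trans (by linarith)
      · intro x hx
        have hxA := (hG hx).1
        have hxW := (hG hx).2
        have hcl : IsClosed (⋃ p ∈ s, B (p : u)) :=
          s.finite_toSet.isClosed_biUnion fun p _ => isClosed_closedBall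
        have hxn : x ∈ (⋃ p ∈ s, B (p : u))ᶜ := by
          intro h
          obtain ⟨p, _, hxp⟩ := mem_iUnion₂.1 h
          exact hxW (mem_iUnion₂.2 ⟨p, p.2, hxp⟩)
        obtain ⟨d, hd, hdB⟩ := Metric.isOpen_iff.1 hcl.isOpen_compl x hxn
        obtain ⟨r, hr, hrd, hrw⟩ := hA x hxA (min (d / 2) δ) (by positivity)
        have hrd1 : r < d := (hrd.trans (min_le_left _ _)).trans_lt (by linarith)
        obtain ⟨b, hb, ⟨z, hz1, hz2⟩, hrb⟩ := hcov (x, r)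
          ⟨hxA, hr, hrd.trans (min_le_right _ _), hrw⟩
        have hbs : (⟨b, hb⟩ : u) ∉ s := by
          intro hbs
          have : z ∈ ball x d := closedBall_subset_ball hrd1 hz1
          exact hdB this (mem_iUnion₂.2 ⟨⟨b, hb⟩, hbs, hz2⟩)
        have hz1' : dist z x ≤ r := hz1
        have hz2' : dist z b.1 ≤ b.2 := hz2
        have hrb' : r ≤ 2 * b.2 := hrb
        have hxb : dist x b.1 ≤ 5 * b.2 := by
          have := dist_triangle_left x b.1 z
          have := (hut hb).2.1
          linarith
        let p : ι := ⟨⟨⟨b, hb⟩, hbs⟩, ⟨x, hx, hxb⟩⟩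
        refine mem_iUnion.2 ⟨p, ?_⟩
        have hyb : dist (y p) b.1 ≤ 5 * b.2 := (hy p).2
        change dist x (y p) ≤ 10 * b.2
        have := dist_triangle_right x (y p) b.1
        linarith
      · calc _ ≤ ∑' p : ι, C * pw μ q ξ (p.1 : u) := ENNReal.tsum_le_tsum fun p =>
              hdoub _ (hu' p).1 _ (hu' p).2.1 ((hu' p).2.2.1.trans hδr) _ (hy p).2
          _ = C * ∑' p : ι, pw μ q ξ (p.1 : u) := ENNReal.tsum_mul_left
          _ ≤ _ := by
            gcongr
            exact ENNReal.tsum_comp_le_tsum_of_injective (f := fun p : ι => p.1)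
              Subtype.val_injective (fun p => pw μ q ξ (p : u))
    have hlim := ENNReal.Tendsto.const_mul (a := C)
      (ENNReal.tendsto_tsum_compl_atTop_zero hsumfin) (Or.inr hC)
    rw [mul_zero] at hlim
    exact le_antisymm (ge_of_tendsto' hlim hbound) zero_le

lemma HM_A_le [SeparableSpace X] [BorelSpace X] (h0 : ξ ∅ = 0) {ε : ℝ} (hε : 0 < ε)
    (hfin : HM μ q ξ univ < ∞) {F A : Set X} (hAF : A ⊆ F) {η : ℝ≥0∞} {δ0 : ℝ} (hδ0 : 0 < δ0)
    (hN : HM μ q ξ univ ≤ Hd μ q ξ δ0 F + η)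
    (hA : ∀ x ∈ A, ∀ d, 0 < d → ∃ r, 0 < r ∧ r ≤ d ∧
      ENNReal.ofReal (1 + ε) * pw μ q ξ (x, r) ≤ HM μ q ξ (closedBall x r))
    {C : ℝ≥0∞} (hC : C ≠ ∞) {r0 : ℝ} (hr0 : 0 < r0)
    (hdoub : ∀ x ∈ A, ∀ r : ℝ, 0 < r → r ≤ r0 → ∀ y ∈ closedBall x (5 * r),
      pw μ q ξ (y, 10 * r) ≤ C * pw μ q ξ (x, r)) :
    ENNReal.ofReal ε * HM μ q ξ A ≤ ENNReal.ofReal (1 + ε) * η := by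
  set d : ℕ → ℝ := fun k => min δ0 r0 / (k + 1) with hd
  have hm0 : 0 < min δ0 r0 := lt_min hδ0 hr0
  have hdpos : ∀ k, 0 < d k := fun k => by positivity
  have hdle : ∀ k, d k ≤ min δ0 r0 := fun k =>
    div_le_self hm0.le (by have : (0 : ℝ) ≤ k := k.cast_nonneg; linarith)
  have hdlim : Tendsto (fun k => 10 * d k) atTop (nhds 0) := by
    have h := tendsto_one_div_add_atTop_nhds_zero_nat (𝕜 := ℝ)
    have := h.const_mul (10 * min δ0 r0)
    rw [mul_zero] at this
    refine this.congr fun k => ?_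
    simp only [hd]; ring
  choose W hWm hWη hWG using fun k => step h0 hε hfin hAF hN hA hC hdoub (hdpos k)
    ((hdle k).trans (min_le_left _ _)) ((hdle k).trans (min_le_right _ _))
  have hcar : ‹MeasurableSpace X› ≤ (HOM μ q ξ h0).caratheodory :=
    (BorelSpace.measurable_eq (α := X)).le.trans (HOM_metric h0).borel_le_caratheodory
  set m : Measure X := (HOM μ q ξ h0).toMeasure hcar with hm
  have hmap : ∀ s, MeasurableSet s → m s = HM μ q ξ s := fun s hs => toMeasure_apply _ _ hs
  set D : ℕ → Set X := fun n => ⋂ k ≥ n, W k with hD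
  have hDm : ∀ n, MeasurableSet (D n) := fun n =>
    MeasurableSet.iInter fun k => MeasurableSet.iInter fun _ => hWm k
  have hDmono : Monotone D := fun a b hab =>
    biInter_subset_biInter_left fun k (hk : k ≥ b) => le_trans hab hk
  have hDη : ENNReal.ofReal ε * HM μ q ξ (⋃ n, D n) ≤ ENNReal.ofReal (1 + ε) * η := by
    rw [← hmap _ (MeasurableSet.iUnion hDm), hDmono.measure_iUnion, ENNReal.mul_iSup]
    refine iSup_le fun n => ?_
    refine le_trans ?_ (hWη n)
    rw [← hmap _ (hWm n)]
    gcongr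
    exact biInter_subset_of_mem (le_refl n)
  have hE0 : HM μ q ξ (A \ ⋃ n, D n) = 0 := by
    refine le_antisymm (HM_le fun G hG δ hδ => ?_) zero_le
    obtain ⟨n, hn⟩ := eventually_atTop.1 (hdlim.eventually (gt_mem_nhds hδ))
    have hGe : G = ⋃ k : {k // k ≥ n}, G \ W k := by
      refine Subset.antisymm (fun x hx => ?_) (iUnion_subset fun k => diff_subset)
      have := (hG hx).2
      simp only [hD, mem_iUnion, mem_iInter, not_exists, not_forall] at this
      obtain ⟨k, hk, hxk⟩ := this n
      exact mem_iUnion.2 ⟨⟨k, hk⟩, hx, hxk⟩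
    rw [hGe]
    refine (Hd_iUnion h0 hδ _).trans (le_of_eq (ENNReal.tsum_eq_zero.2 fun k => ?_))
    refine le_antisymm ((Hd_anti h0 (by have := hdpos k; positivity) (hn k k.2).le).trans ?_)
      zero_le
    exact (hWG k _ (diff_subset_diff_left fun x hx => (hG hx).1)).le
  refine le_trans ?_ hDη
  gcongr
  have : A ⊆ (⋃ n, D n) ∪ (A \ ⋃ n, D n) := by rw [union_diff_self]; exact subset_union_right
  calc HM μ q ξ A ≤ HM μ q ξ ((⋃ n, D n) ∪ (A \ ⋃ n, D n)) := (HOM μ q ξ h0).mono this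
    _ ≤ HM μ q ξ (⋃ n, D n) + HM μ q ξ (A \ ⋃ n, D n) :=
        measure_union_le (μ := HOM μ q ξ h0) _ _
    _ = _ := by rw [hE0, add_zero]

end Helpers

section Thms

variable [MetricSpace X] [SeparableSpace X] [MeasurableSpace X] [BorelSpace X]
variable [MetricSpace X'] [SeparableSpace X'] [MeasurableSpace X'] [BorelSpace X']

theorem stmt15 (μ : Measure X) [IsProbabilityMeasure μ] (hμ : MeasureBlanketed μ)
    (q : ℝ) (ξ : Set X → ℝ≥0∞) (hξ : IsPremeasure ξ) (hξD : PremeasureBlanketed ξ)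
    (ε : ℝ) (hε : 0 < ε) (hfin : HM μ q ξ univ < ∞) :
    HM μ q ξ univ =
      HM μ q ξ {x : X | ∃ δx : ℝ, 0 < δx ∧ ∀ r : ℝ, 0 < r → r ≤ δx →
        HM μ q ξ (closedBall x r) ≤
          ENNReal.ofReal (1 + ε) * ballWeight μ q ξ (closedBall x r)} := by
  set Λ := {x : X | ∃ δx : ℝ, 0 < δx ∧ ∀ r : ℝ, 0 < r → r ≤ δx →
        HM μ q ξ (closedBall x r) ≤
          ENNReal.ofReal (1 + ε) * ballWeight μ q ξ (closedBall x r)} with hΛ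
  have h0 := hξ.1
  refine le_antisymm ?_ ((HOM μ q ξ h0).mono (subset_univ _))
  by_cases hz : HM μ q ξ univ = 0
  · rw [hz]; exact zero_le
  obtain ⟨T, hT, C, hC, r0, hr0, hdoub⟩ := exists_T (q := q) hμ hξ hξD
  set c : ℝ≥0∞ := (ENNReal.ofReal ε)⁻¹ * ENNReal.ofReal (1 + ε) with hc
  have hε0 : ENNReal.ofReal ε ≠ 0 := by simpa using hε
  have hcfin : c ≠ ∞ := ENNReal.mul_ne_top (ENNReal.inv_ne_top.2 hε0) ENNReal.ofReal_ne_top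
  have main : ∀ η : ℝ≥0∞, η ≠ 0 → HM μ q ξ univ ≤ HM μ q ξ Λ + (c * η + η) := by
    intro η hη
    obtain ⟨F, -, δ0, hδ0, hF⟩ := lt_HM (ENNReal.sub_lt_self hfin.ne hz hη)
    have hN : HM μ q ξ univ ≤ Hd μ q ξ δ0 F + η := tsub_le_iff_right.1 hF.le
    have hA := HM_A_le (A := (F \ Λ) ∩ T) h0 hε hfin
      (fun x hx => hx.1.1) hδ0 hN (by
        rintro x ⟨⟨_, hx⟩, _⟩ d hd
        simp only [hΛ, mem_setOf_eq, not_exists, not_and, not_forall, not_le] at hx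
        obtain ⟨r, hr, hrd, h⟩ := hx d hd
        exact ⟨r, hr, hrd, h.le⟩) hC hr0 (fun x hx => hdoub x hx.2)
    have hA' : HM μ q ξ ((F \ Λ) ∩ T) ≤ c * η := by
      rw [hc, mul_assoc]
      exact (ENNReal.mul_le_iff_le_inv hε0 ENNReal.ofReal_ne_top).1 hA
    have hsub : F ⊆ (Λ ∪ (F \ Λ) ∩ T) ∪ Tᶜ := by
      intro x hx
      by_cases h1 : x ∈ Λ
      · exact Or.inl (Or.inl h1)
      · by_cases h2 : x ∈ T
        · exact Or.inl (Or.inr ⟨⟨hx, h1⟩, h2⟩)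
        · exact Or.inr h2
    calc HM μ q ξ univ ≤ Hd μ q ξ δ0 F + η := hN
      _ ≤ HM μ q ξ ((Λ ∪ (F \ Λ) ∩ T) ∪ Tᶜ) + η := by
          gcongr; exact Hd_le_HM hδ0 hsub
      _ ≤ (HM μ q ξ (Λ ∪ (F \ Λ) ∩ T) + HM μ q ξ Tᶜ) + η := by
          gcongr; exact measure_union_le (μ := HOM μ q ξ h0) _ _
      _ ≤ ((HM μ q ξ Λ + HM μ q ξ ((F \ Λ) ∩ T)) + HM μ q ξ Tᶜ) + η := by
          gcongr; exact measure_union_le (μ := HOM μ q ξ h0) _ _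
      _ ≤ ((HM μ q ξ Λ + c * η) + 0) + η := by rw [hT]; gcongr
      _ = _ := by ring
  have hlim : Tendsto (fun η : ℝ≥0∞ => HM μ q ξ Λ + (c * η + η)) (nhdsWithin 0 (Ioi 0))
      (nhds (HM μ q ξ Λ + (c * 0 + 0))) := by
    refine Tendsto.mono_left ?_ nhdsWithin_le_nhds
    exact tendsto_const_nhds.add
      ((ENNReal.Tendsto.const_mul tendsto_id (Or.inr hcfin)).add tendsto_id)
  simp only [mul_zero, add_zero] at hlim
  exact ge_of_tendsto hlim (eventually_nhdsWithin_of_forall fun η hη => main η (ne_of_gt hη))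

end Thms
end
end

section
/- Let (X,ρ) and (X',ρ') be separable metric spaces, μ a blanketed Borel probability measure on X, ν a blanketed Borel probability measure on X', ξ ∈ Φ_D a blanketed premeasure on X, ξ' ∈ Φ_D a blanketed premeasure on X', and q ∈ ℝ. Let E ⊆ supp μ and E' ⊆ supp ν be Borel sets with H^{q,ξ}_μ(E) < ∞ and H^{q,ξ'}_ν(E') < ∞. Then H^{q,ξ}_μ(E) · H^{q,ξ'}_ν(E') ≤ H^{q,ξ₀}_{μ×ν}(E×E'), where the product X×X' carries the metric max(ρ,ρ') and ξ₀(B×B') = ξ(B)·ξ'(B'). -/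
open Metric MeasureTheory Set Filter TopologicalSpace
open scoped ENNReal NNReal Classical

noncomputable section

variable {X X' : Type*}

section Helpers

variable {Y : Type*} [MetricSpace Y] [MeasurableSpace Y]

theorem aux_Hd_le (μ : Measure Y) (q : ℝ) (ξ : Set Y → ℝ≥0∞) (h0 : ξ ∅ = 0) {δ : ℝ} (hδ : 0 ≤ δ)
    {F : Set Y} {ι : Type*} [Countable ι] (c : ι → Y) (r : ι → ℝ) (hc : ∀ i, c i ∈ F)
    (hd : ∀ i, diam (closedBall (c i) (r i)) ≤ 2 * δ)
    (hF : F ⊆ ⋃ i, closedBall (c i) (r i)) :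
    Hd μ q ξ δ F ≤ ∑' i, ballWeight μ q ξ (closedBall (c i) (r i)) := by
  unfold Hd
  split_ifs with hE
  · simp
  obtain ⟨x0, hx0⟩ := nonempty_iff_ne_empty.2 hE
  obtain ⟨f, hf⟩ := exists_injective_nat ι
  set c' : ℕ → Y := Function.extend f c (fun _ => x0) with hc'
  set r' : ℕ → ℝ := Function.extend f r (fun _ => -1) with hr'
  have e1 : ∀ i, c' (f i) = c i := fun i => hf.extend_apply _ _ _
  have e2 : ∀ i, r' (f i) = r i := fun i => hf.extend_apply _ _ _
  have e3 : ∀ n, n ∉ range f → c' n = x0 := fun n hn => Function.extend_apply' _ _ _ hn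
  have e4 : ∀ n, n ∉ range f → r' n = -1 := fun n hn => Function.extend_apply' _ _ _ hn
  have e5 : ∀ n, n ∉ range f → closedBall (c' n) (r' n) = ∅ := fun n hn => by
    rw [e4 n hn]; exact closedBall_eq_empty.2 (by norm_num)
  have hcov : IsCenteredCover F δ c' r' := by
    refine ⟨?_, ?_, ?_⟩
    · intro n
      by_cases hn : n ∈ range f
      · obtain ⟨i, rfl⟩ := hn
        rw [e1]; exact hc i
      · rw [e3 n hn]; exact hx0
    · intro n
      by_cases hn : n ∈ range f
      · obtain ⟨i, rfl⟩ := hn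
        rw [e1, e2]; exact hd i
      · rw [e5 n hn]; simpa using hδ
    · intro y hy
      obtain ⟨i, hi⟩ := mem_iUnion.1 (hF hy)
      refine mem_iUnion.2 ⟨f i, ?_⟩
      rwa [e1, e2]
  refine le_trans (b := ∑' n, ballWeight μ q ξ (closedBall (c' n) (r' n)))
    (iInf_le_of_le c' (iInf_le_of_le r' (iInf_le_of_le hcov le_rfl))) ?_
  · rw [← hf.tsum_eq (f := fun n => ballWeight μ q ξ (closedBall (c' n) (r' n)))]
    · simp only [e1, e2]; exact le_rfl
    · intro n hn
      by_contra hn'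
      apply hn
      simp only [e5 n hn', ballWeight, h0, mul_zero]

theorem aux_Hd_anti (μ : Measure Y) (q : ℝ) (ξ : Set Y → ℝ≥0∞) {δ δ' : ℝ} (h : δ' ≤ δ)
    (F : Set Y) : Hd μ q ξ δ F ≤ Hd μ q ξ δ' F := by
  unfold Hd
  split_ifs with hE
  · exact le_rfl
  refine le_iInf fun c => le_iInf fun r => le_iInf fun hcr => ?_
  exact iInf_le_of_le c <| iInf_le_of_le r <|
    iInf_le_of_le ⟨hcr.1, fun i => (hcr.2.1 i).trans (by linarith), hcr.2.2⟩ le_rfl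

theorem aux_Hd_le_HM (μ : Measure Y) (q : ℝ) (ξ : Set Y → ℝ≥0∞) {δ : ℝ} (h : 0 < δ)
    {F E : Set Y} (hFE : F ⊆ E) : Hd μ q ξ δ F ≤ HM μ q ξ E :=
  le_iSup₂_of_le F hFE (le_iSup₂_of_le δ h le_rfl)

theorem aux_HM_le (μ : Measure Y) (q : ℝ) (ξ : Set Y → ℝ≥0∞) {E : Set Y} {C : ℝ≥0∞}
    (h : ∀ F ⊆ E, ∀ δ > 0, Hd μ q ξ δ F ≤ C) : HM μ q ξ E ≤ C :=
  iSup₂_le fun F hF => iSup₂_le fun δ hδ => h F hF δ hδ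

theorem aux_Hd_empty (μ : Measure Y) (q : ℝ) (ξ : Set Y → ℝ≥0∞) (δ : ℝ) :
    Hd μ q ξ δ ∅ = 0 := by simp [Hd]

theorem aux_exists_cover (μ : Measure Y) (q : ℝ) (ξ : Set Y → ℝ≥0∞) {δ : ℝ}
    {F : Set Y} (hF : F.Nonempty) {C : ℝ≥0∞} (h : Hd μ q ξ δ F < C) :
    ∃ c r, IsCenteredCover F δ c r ∧ ∑' i, ballWeight μ q ξ (closedBall (c i) (r i)) < C := by
  unfold Hd at h
  rw [if_neg hF.ne_empty] at h
  simp only [iInf_lt_iff] at h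
  obtain ⟨c, r, hcr, h⟩ := h
  exact ⟨c, r, hcr, h⟩

theorem aux_mem_dist {c y : Y} {r δ : ℝ} (hd : diam (closedBall c r) ≤ 2 * δ)
    (hy : y ∈ closedBall c r) : dist y c ≤ 2 * δ := by
  have hr : 0 ≤ r := dist_nonneg.trans hy
  exact (dist_le_diam_of_mem isBounded_closedBall hy (mem_closedBall_self hr)).trans hd

theorem aux_Hd_iUnion (μ : Measure Y) (q : ℝ) (ξ : Set Y → ℝ≥0∞) (h0 : ξ ∅ = 0) {δ : ℝ}
    (hδ : 0 < δ) (F : ℕ → Set Y) : Hd μ q ξ δ (⋃ n, F n) ≤ ∑' n, Hd μ q ξ δ (F n) := by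
  refine ENNReal.le_of_forall_pos_le_add fun ε hε hfin => ?_
  obtain ⟨e, he, hes⟩ := ENNReal.exists_pos_sum_of_countable (ε := ε) (by exact_mod_cast hε.ne') ℕ
  have hfin' : ∀ n, Hd μ q ξ δ (F n) ≠ ∞ := ENNReal.ne_top_of_tsum_ne_top hfin.ne
  have key : ∀ n : {n // (F n).Nonempty}, ∃ c r, IsCenteredCover (F n) δ c r ∧
      ∑' i, ballWeight μ q ξ (closedBall (c i) (r i)) < Hd μ q ξ δ (F n) + e n := fun n =>
    aux_exists_cover μ q ξ n.2
      (ENNReal.lt_add_right (hfin' n) (by exact_mod_cast (he n).ne'))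
  choose c r hcr hs using key
  have := aux_Hd_le μ q ξ h0 hδ.le (F := ⋃ n, F n)
    (fun p : {n // (F n).Nonempty} × ℕ => c p.1 p.2) (fun p => r p.1 p.2)
    (fun p => mem_iUnion.2 ⟨p.1, (hcr p.1).1 p.2⟩) (fun p => (hcr p.1).2.1 p.2)
    (by
      intro y hy
      obtain ⟨n, hn⟩ := mem_iUnion.1 hy
      obtain ⟨i, hi⟩ := mem_iUnion.1 ((hcr ⟨n, ⟨y, hn⟩⟩).2.2 hn)
      exact mem_iUnion.2 ⟨(⟨n, ⟨y, hn⟩⟩, i), hi⟩)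
  refine this.trans ?_
  rw [ENNReal.tsum_prod (f := fun (a : {n // (F n).Nonempty}) b =>
    ballWeight μ q ξ (closedBall (c a b) (r a b)))]
  calc _ ≤ ∑' a : {n // (F n).Nonempty}, (Hd μ q ξ δ (F a) + e a) :=
        ENNReal.tsum_le_tsum fun a => (hs a).le
    _ ≤ ∑' n, (Hd μ q ξ δ (F n) + e n) :=
        ENNReal.tsum_comp_le_tsum_of_injective Subtype.val_injective
          (fun n => Hd μ q ξ δ (F n) + e n)
    _ = ∑' n, Hd μ q ξ δ (F n) + ∑' n, (e n : ℝ≥0∞) := ENNReal.tsum_add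
    _ ≤ _ := by gcongr

/-- The generalized Hausdorff measure as an outer measure. -/
def auxOuter (μ : Measure Y) (q : ℝ) (ξ : Set Y → ℝ≥0∞) (h0 : ξ ∅ = 0) : OuterMeasure Y where
  measureOf := HM μ q ξ
  empty := by
    refine le_antisymm (aux_HM_le μ q ξ fun F hF δ hδ => ?_) bot_le
    rw [subset_empty_iff.1 hF, aux_Hd_empty]
  mono := fun {s t} hst => aux_HM_le μ q ξ fun F hF δ hδ => aux_Hd_le_HM μ q ξ hδ (hF.trans hst)
  iUnion_nat := fun s _ => aux_HM_le μ q ξ fun F hF δ hδ => by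
    have : F = ⋃ n, F ∩ s n := by rw [← inter_iUnion, inter_eq_left.2 hF]
    rw [this]
    exact (aux_Hd_iUnion μ q ξ h0 hδ _).trans
      (ENNReal.tsum_le_tsum fun n => aux_Hd_le_HM μ q ξ hδ inter_subset_right)

theorem aux_Hd_sep (μ : Measure Y) (q : ℝ) (ξ : Set Y → ℝ≥0∞) (h0 : ξ ∅ = 0) {δ : ℝ}
    (hδ : 0 < δ) {F G : Set Y} (hsep : ∀ x ∈ F, ∀ y ∈ G, 2 * δ < dist x y) :
    Hd μ q ξ δ F + Hd μ q ξ δ G ≤ Hd μ q ξ δ (F ∪ G) := by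
  conv_rhs => unfold Hd
  split_ifs with hE
  · obtain ⟨rfl, rfl⟩ := union_empty_iff.1 hE
    simp [aux_Hd_empty]
  refine le_iInf fun c => le_iInf fun r => le_iInf fun hcr => ?_
  set w : ℕ → ℝ≥0∞ := fun i => ballWeight μ q ξ (closedBall (c i) (r i)) with hw
  have hF := aux_Hd_le μ q ξ h0 hδ.le (F := F) (fun i : {i // c i ∈ F} => c i) (fun i => r i)
    (fun i => i.2) (fun i => hcr.2.1 i) (by
      intro y hy
      obtain ⟨i, hi⟩ := mem_iUnion.1 (hcr.2.2 (Or.inl hy))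
      have hci : c i ∈ F := by
        rcases hcr.1 i with h | h
        · exact h
        · exact absurd (aux_mem_dist (hcr.2.1 i) hi) (not_le.2 (hsep y hy _ h))
      exact mem_iUnion.2 ⟨⟨i, hci⟩, hi⟩)
  have hG := aux_Hd_le μ q ξ h0 hδ.le (F := G) (fun i : {i // c i ∈ G} => c i) (fun i => r i)
    (fun i => i.2) (fun i => hcr.2.1 i) (by
      intro y hy
      obtain ⟨i, hi⟩ := mem_iUnion.1 (hcr.2.2 (Or.inr hy))
      have hci : c i ∈ G := by
        rcases hcr.1 i with h | h
        · refine absurd (aux_mem_dist (hcr.2.1 i) hi) (not_le.2 ?_)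
          rw [dist_comm]; exact hsep _ h y hy
        · exact h
      exact mem_iUnion.2 ⟨⟨i, hci⟩, hi⟩)
  have hdisj : Disjoint {i | c i ∈ F} {i | c i ∈ G} := by
    rw [Set.disjoint_left]
    intro i h1 h2
    have := hsep _ h1 _ h2
    rw [dist_self] at this
    linarith
  calc _ ≤ ∑' i : {i | c i ∈ F}, w i + ∑' i : {i | c i ∈ G}, w i := add_le_add hF hG
    _ = ∑' i : ({i | c i ∈ F} ∪ {i | c i ∈ G} : Set ℕ), w i :=
        (ENNReal.summable.tsum_union_disjoint hdisj ENNReal.summable).symm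
    _ ≤ ∑' i, w i := ENNReal.tsum_comp_le_tsum_of_injective Subtype.val_injective w

theorem aux_isMetric (μ : Measure Y) (q : ℝ) (ξ : Set Y → ℝ≥0∞) (h0 : ξ ∅ = 0) :
    (auxOuter μ q ξ h0).IsMetric := by
  rintro s t ⟨ρ, hρ, hst⟩
  refine le_antisymm (measure_union_le _ _) ?_
  obtain ⟨d, hd0, hd⟩ : ∃ d : ℝ, 0 < d ∧ ∀ x ∈ s, ∀ y ∈ t, 2 * d < dist x y := by
    obtain ⟨e, he0, he⟩ := ENNReal.lt_iff_exists_nnreal_btwn.1 (pos_iff_ne_zero.2 hρ)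
    have he0' : 0 < (e : ℝ) := by exact_mod_cast he0
    refine ⟨e / 2, by positivity, fun x hx y hy => ?_⟩
    have := he.trans_le (hst x hx y hy)
    rw [edist_nndist] at this
    have h2 : e < nndist x y := by exact_mod_cast this
    rw [← coe_nndist]
    have h3 : (e : ℝ) < nndist x y := by exact_mod_cast h2
    linarith
  change HM μ q ξ s + HM μ q ξ t ≤ HM μ q ξ (s ∪ t)
  have h1 : ∀ F ⊆ s, ∀ δ > 0, ∀ G ⊆ t, ∀ δ' > 0,
      Hd μ q ξ δ F + Hd μ q ξ δ' G ≤ HM μ q ξ (s ∪ t) := by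
    intro F hF δ hδ G hG δ' hδ'
    set η := min d (min δ δ')
    have hη : 0 < η := by positivity
    have hηd : η ≤ d := min_le_left _ _
    calc _ ≤ Hd μ q ξ η F + Hd μ q ξ η G :=
          add_le_add (aux_Hd_anti _ _ _ ((min_le_right _ _).trans (min_le_left _ _)) _)
            (aux_Hd_anti _ _ _ ((min_le_right _ _).trans (min_le_right _ _)) _)
      _ ≤ Hd μ q ξ η (F ∪ G) := aux_Hd_sep μ q ξ h0 hη fun x hx y hy =>
          lt_of_le_of_lt (by linarith) (hd x (hF hx) y (hG hy))
      _ ≤ _ := aux_Hd_le_HM μ q ξ hη (union_subset_union hF hG)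
  simp only [HM, H0] at h1 ⊢
  rw [ENNReal.biSup_add' (p := fun F => F ⊆ s) ⟨∅, empty_subset _⟩]
  refine iSup₂_le fun F hF => ?_
  rw [ENNReal.biSup_add' (p := fun d : ℝ => 0 < d) ⟨1, one_pos⟩]
  refine iSup₂_le fun δ hδ => ?_
  rw [ENNReal.add_biSup' (p := fun F => F ⊆ t) ⟨∅, empty_subset _⟩]
  refine iSup₂_le fun G hG => ?_
  rw [ENNReal.add_biSup' (p := fun d : ℝ => 0 < d) ⟨1, one_pos⟩]
  exact iSup₂_le fun δ' hδ' => h1 F hF δ hδ G hG δ' hδ'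


theorem aux_epow_mul {a b : ℝ≥0∞} (ha : a ≠ ∞) (hb : b ≠ ∞) (q : ℝ) :
    epow (a * b) q = epow a q * epow b q := by
  unfold epow
  by_cases hq : q ≤ 0
  · by_cases h1 : a = 0
    · by_cases h2 : b = 0
      · simp [h1, h2, hq]
      · have : b ^ q ≠ 0 := by
          intro h
          rcases ENNReal.rpow_eq_zero_iff.1 h with h | h
          · exact h2 h.1
          · exact hb h.1
        simp [h1, h2, hq, ENNReal.top_mul this]
    · by_cases h2 : b = 0
      · have : a ^ q ≠ 0 := by
          intro h
          rcases ENNReal.rpow_eq_zero_iff.1 h with h | h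
          · exact h1 h.1
          · exact ha h.1
        simp [h1, h2, hq, ENNReal.mul_top this]
      · simp [h1, h2, ENNReal.mul_rpow_of_ne_top ha hb]
  · simp [hq, ENNReal.mul_rpow_of_ne_top ha hb]

theorem aux_meas_doubling (μ : Measure Y) [IsProbabilityMeasure μ] (hμ : MeasureBlanketed μ) :
    ∃ M : ℝ≥0, ∃ r0 : ℝ, 0 < r0 ∧ ∀ x ∈ measSupport μ, ∀ r, 0 < r → r < r0 →
      μ (closedBall x (4 * r)) ≤ M * μ (closedBall x r) := by
  obtain ⟨a, ha, hlim⟩ := hμ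
  obtain ⟨M, hM1, hM2⟩ := ENNReal.lt_iff_exists_nnreal_btwn.1 hlim
  have hev := eventually_lt_of_limsup_lt hM1
  obtain ⟨r0, hr0, hr0'⟩ := mem_nhdsGT_iff_exists_Ioo_subset.1 hev
  have hr0 : 0 < r0 := hr0
  have h1 : ∀ x ∈ measSupport μ, ∀ r, 0 < r → r < r0 →
      μ (closedBall x (a * r)) ≤ M * μ (closedBall x r) := by
    intro x hx r hr hrr
    have h := hr0' ⟨hr, hrr⟩
    have h2 : μ (closedBall x (a * r)) / μ (closedBall x r) ≤ M :=
      (le_iSup₂ (f := fun x (_ : x ∈ measSupport μ) =>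
        μ (closedBall x (a * r)) / μ (closedBall x r)) x hx).trans (le_of_lt h)
    have hpos : μ (closedBall x r) ≠ 0 :=
      ((hx r hr).trans_le (measure_mono ball_subset_closedBall)).ne'
    exact (ENNReal.div_le_iff hpos (measure_ne_top _ _)).1 h2
  obtain ⟨k, hk⟩ := pow_unbounded_of_one_lt 4 ha
  have hapos : 0 < a := by linarith
  have h2 : ∀ n : ℕ, ∀ x ∈ measSupport μ, ∀ r, 0 < r → a ^ n * r < r0 →
      μ (closedBall x (a ^ n * r)) ≤ (M : ℝ≥0∞) ^ n * μ (closedBall x r) := by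
    intro n
    induction n with
    | zero => intro x hx r hr hrr; simp
    | succ n ih =>
      intro x hx r hr hrr
      have hlt : a ^ n * r < r0 := by
        refine lt_of_le_of_lt ?_ hrr
        gcongr
        · exact ha.le
        · omega
      have e : a ^ (n + 1) * r = a * (a ^ n * r) := by ring
      rw [e, pow_succ, mul_comm ((M : ℝ≥0∞) ^ n), mul_assoc]
      refine (h1 x hx _ (by positivity) hlt).trans ?_
      gcongr
      exact ih x hx r hr hlt
  refine ⟨M ^ k, r0 / a ^ k, by positivity, fun x hx r hr hrr => ?_⟩
  rw [lt_div_iff₀ (by positivity)] at hrr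
  push_cast
  refine le_trans (measure_mono (closedBall_subset_closedBall ?_)) (h2 k x hx r hr (by linarith))
  gcongr

theorem aux_weight_doubling (μ : Measure Y) [IsProbabilityMeasure μ] (hμ : MeasureBlanketed μ)
    (q : ℝ) (ξ : Set Y → ℝ≥0∞) (hξD : PremeasureBlanketed ξ) :
    ∃ M : ℝ≥0, ∃ r0 : ℝ, 0 < r0 ∧ ∀ x ∈ measSupport μ, ∀ r, 0 < r → r < r0 →
      ballWeight μ q ξ (closedBall x (4 * r)) ≤ M * ballWeight μ q ξ (closedBall x r) := by
  obtain ⟨M, r0, hr0, hM⟩ := aux_meas_doubling μ hμ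
  obtain ⟨K, hK1, hK⟩ := hξD
  have hpow : ∃ M' : ℝ≥0, ∀ x ∈ measSupport μ, ∀ r, 0 < r → r < r0 →
      epow (μ (closedBall x (4 * r))) q ≤ M' * epow (μ (closedBall x r)) q := by
    have hpos : ∀ x ∈ measSupport μ, ∀ r, 0 < r → μ (closedBall x r) ≠ 0 := fun x hx r hr =>
      ((hx r hr).trans_le (measure_mono ball_subset_closedBall)).ne'
    rcases le_total 0 q with hq | hq
    · refine ⟨M ^ q, fun x hx r hr hrr => ?_⟩
      simp only [epow, hpos x hx r hr, hpos x hx (4 * r) (by positivity), false_and, if_false]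
      rw [ENNReal.coe_rpow_of_nonneg _ hq, ← ENNReal.mul_rpow_of_nonneg _ _ hq]
      exact ENNReal.rpow_le_rpow (hM x hx r hr hrr) hq
    · refine ⟨1, fun x hx r hr hrr => ?_⟩
      simp only [epow, hpos x hx r hr, hpos x hx (4 * r) (by positivity), false_and, if_false]
      rw [ENNReal.coe_one, one_mul]
      obtain ⟨p, rfl⟩ : ∃ p, q = -p := ⟨-q, (neg_neg q).symm⟩
      rw [ENNReal.rpow_neg, ENNReal.rpow_neg, ENNReal.inv_le_inv]
      exact ENNReal.rpow_le_rpow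
        (measure_mono (closedBall_subset_closedBall (by linarith))) (by linarith)
  obtain ⟨M', hM'⟩ := hpow
  refine ⟨M' * (K * K), min r0 (1 / 2), by positivity, fun x hx r hr hrr => ?_⟩
  have h1 := hM' x hx r hr (hrr.trans_le (min_le_left _ _))
  have hr2 : r < 1 / 2 := hrr.trans_le (min_le_right _ _)
  have h2 : ξ (closedBall x (4 * r)) ≤ (K * K) * ξ (closedBall x r) := by
    have e : 4 * r = 2 * (2 * r) := by ring
    rw [e, mul_assoc]
    refine (hK x (2 * r) (by linarith) (by linarith)).trans ?_
    gcongr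
    exact hK x r hr (by linarith)
  unfold ballWeight
  push_cast
  calc _ ≤ (M' * epow (μ (closedBall x r)) q) * ((K * K) * ξ (closedBall x r)) :=
        mul_le_mul' h1 h2
    _ = _ := by ring

/-- The Vitali estimate. -/
theorem aux_vitali [SeparableSpace Y] [BorelSpace Y]
    (μ : Measure Y) [IsProbabilityMeasure μ] (hμ : MeasureBlanketed μ)
    (q : ℝ) (ξ : Set Y → ℝ≥0∞) (h0 : ξ ∅ = 0) (hξD : PremeasureBlanketed ξ)
    (lam : Measure Y) [IsFiniteMeasure lam] (t : ℝ≥0∞) (ht : 1 ≤ t)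
    (F U : Set Y) (hF : F ⊆ measSupport μ) (hU : IsOpen U) (hFU : F ⊆ U)
    (hA : ∀ x ∈ F, ∀ ρ > 0, ∃ r, 0 < r ∧ r < ρ ∧
      t * ballWeight μ q ξ (closedBall x r) < lam (closedBall x r))
    (δ : ℝ) (hδ : 0 < δ) : t * Hd μ q ξ δ F ≤ lam U := by
  obtain ⟨M, r0, hr0, hM⟩ := aux_weight_doubling μ hμ q ξ hξD
  set R := min r0 (δ / 4) with hR
  have hRpos : 0 < R := by positivity
  set T : Set (Y × ℝ) := {p | p.1 ∈ F ∧ 0 < p.2 ∧ p.2 < R ∧ closedBall p.1 p.2 ⊆ U ∧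
    t * ballWeight μ q ξ (closedBall p.1 p.2) < lam (closedBall p.1 p.2)} with hT
  set B : Y × ℝ → Set Y := fun p => closedBall p.1 p.2 with hB
  obtain ⟨u, huT, hudisj, hu⟩ := Vitali.exists_disjoint_subfamily_covering_enlargement
    B T (fun p => p.2) 2 (by norm_num) (fun p hp => hp.2.1.le) R
    (fun p hp => hp.2.2.1.le) (fun p hp => ⟨p.1, mem_closedBall_self hp.2.1.le⟩)
  have hucount : u.Countable := hudisj.countable_of_nonempty_interior fun p hp =>
    ⟨p.1, ball_subset_interior_closedBall (mem_ball_self (huT hp).2.1)⟩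
  have : Countable u := hucount.to_subtype
  set w : u → ℝ≥0∞ := fun p => ballWeight μ q ξ (B p) with hw
  have hsum : t * ∑' p, w p ≤ lam U := by
    rw [← ENNReal.tsum_mul_left]
    calc _ ≤ ∑' p : u, lam (B p) := ENNReal.tsum_le_tsum fun p => (huT p.2).2.2.2.2.le
      _ = lam (⋃ p : u, B p) := by
          rw [measure_iUnion]
          · intro p p' hpp
            exact hudisj p.2 p'.2 (fun h => hpp (Subtype.ext h))
          · intro p; exact measurableSet_closedBall
      _ ≤ lam U := measure_mono (iUnion_subset fun p => (huT p.2).2.2.2.1)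
  have hsumfin : ∑' p, w p ≠ ∞ := by
    intro h
    rw [h, ENNReal.mul_top (by positivity)] at hsum
    exact (measure_lt_top lam U).ne (top_le_iff.1 hsum)
  have hS : ∀ S : Finset u, Hd μ q ξ δ F ≤ ∑' p, w p + M * ∑' p : {p // p ∉ S}, w p := by
    intro S
    have hcl : IsClosed (⋃ p ∈ S, B p) := S.finite_toSet.isClosed_biUnion
      (fun p _ => isClosed_closedBall)
    have h1 := aux_Hd_le μ q ξ h0 hδ.le (F := F) (fun p : u => p.1.1)
      (fun p => if p ∈ S then p.1.2 else 4 * p.1.2) (fun p => (huT p.2).1)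
      (by
        intro p
        have hp := huT p.2
        have hp1 : p.1.2 < δ / 4 := hp.2.2.1.trans_le (min_le_right _ _)
        have hp2 := hp.2.1
        split_ifs
        · exact (diam_closedBall hp2.le).trans (by linarith)
        · exact (diam_closedBall (by linarith)).trans (by linarith))
      (by
        intro x hx
        by_cases hxS : x ∈ ⋃ p ∈ S, B p
        · simp only [mem_iUnion] at hxS
          obtain ⟨p, hp, hxp⟩ := hxS
          refine mem_iUnion.2 ⟨p, ?_⟩
          rw [if_pos hp]; exact hxp
        · have hopen : IsOpen (U ∩ (⋃ p ∈ S, B p)ᶜ) := hU.inter hcl.isOpen_compl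
          obtain ⟨ρ, hρ, hρsub⟩ := Metric.isOpen_iff.1 hopen x ⟨hFU hx, hxS⟩
          obtain ⟨r, hr, hrr, hlt⟩ := hA x hx (min ρ R) (by positivity)
          have hsub := (closedBall_subset_ball (hrr.trans_le (min_le_left _ _))).trans hρsub
          obtain ⟨b, hbu, ⟨z, hz1, hz2⟩, hbr⟩ := hu (x, r)
            ⟨hx, hr, hrr.trans_le (min_le_right _ _), hsub.trans inter_subset_left, hlt⟩
          have hbS : (⟨b, hbu⟩ : u) ∉ S := by
            intro h
            exact (hsub hz1).2 (mem_iUnion₂.2 ⟨⟨b, hbu⟩, h, hz2⟩)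
          refine mem_iUnion.2 ⟨⟨b, hbu⟩, ?_⟩
          rw [if_neg hbS]
          have d1 : dist z x ≤ r := hz1
          have d2 : dist z b.1 ≤ b.2 := hz2
          have d3 : r ≤ 2 * b.2 := hbr
          have d4 := dist_triangle_left x b.1 z
          have d5 := (huT hbu).2.1
          rw [mem_closedBall]
          linarith)
    refine h1.trans ?_
    have h2 : ∑' p : {p // p ∉ S}, w p = ∑' p : u, ({p | p ∉ S} : Set u).indicator w p :=
      tsum_subtype ({p | p ∉ S} : Set u) w
    rw [h2, ← ENNReal.tsum_mul_left, ← ENNReal.tsum_add]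
    refine ENNReal.tsum_le_tsum fun p => ?_
    by_cases hp : p ∈ S
    · simp only [hp, if_true]
      exact le_self_add
    · simp only [hp, if_false]
      rw [indicator_of_mem (by exact hp)]
      exact (hM _ (hF (huT p.2).1) _ (huT p.2).2.1
        ((huT p.2).2.2.1.trans_le (min_le_left _ _))).trans le_add_self
  have hlim : Tendsto (fun S : Finset u => ∑' p, w p + M * ∑' p : {p // p ∉ S}, w p) atTop
      (nhds (∑' p, w p + M * 0)) :=
    tendsto_const_nhds.add (ENNReal.Tendsto.const_mul
      (ENNReal.tendsto_tsum_compl_atTop_zero hsumfin) (Or.inr ENNReal.coe_ne_top))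
  have := ge_of_tendsto' hlim hS
  rw [mul_zero, add_zero] at this
  exact (mul_le_mul_right this t).trans hsum

theorem aux_HM_singleton (μ : Measure Y) (q : ℝ) (ξ : Set Y → ℝ≥0∞) (h0 : ξ ∅ = 0) (x : Y) :
    HM μ q ξ {x} ≤ ballWeight μ q ξ (closedBall x 0) := by
  refine aux_HM_le μ q ξ fun F hF δ hδ => ?_
  rcases subset_singleton_iff_eq.1 hF with rfl | rfl
  · rw [aux_Hd_empty]; exact bot_le
  · have := aux_Hd_le μ q ξ h0 hδ.le (F := {x}) (fun _ : Unit => x) (fun _ => 0)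
      (fun _ => rfl) (fun _ => by simpa using hδ.le) (by simp)
    simpa using this

/-- The density decomposition: `E` is, up to a set of inner measure zero, the increasing union of
sets on which the density inequality holds uniformly. -/
theorem aux_density [SeparableSpace Y] [BorelSpace Y]
    (μ : Measure Y) [IsProbabilityMeasure μ] (hμ : MeasureBlanketed μ)
    (q : ℝ) (ξ : Set Y → ℝ≥0∞) (h0 : ξ ∅ = 0) (hξD : PremeasureBlanketed ξ)
    (E : Set Y) (hEm : MeasurableSet E) (hE : E ⊆ measSupport μ) (hfin : HM μ q ξ E < ∞)
    (t : ℝ≥0∞) (ht : 1 < t) :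
    ∃ (lam : Measure Y) (En : ℕ → Set Y), (∀ n, En n ⊆ E) ∧
      (HM μ q ξ E ≤ ⨆ n, lam (En n)) ∧
      ∀ n, ∀ x ∈ En n, ∀ r, 0 ≤ r → r < 1 / ((n : ℝ) + 1) →
        lam (closedBall x r) ≤ t * ballWeight μ q ξ (closedBall x r) := by
  set m := auxOuter μ q ξ h0 with hm
  have hle : ‹MeasurableSpace Y› ≤ m.caratheodory := (aux_isMetric μ q ξ h0).le_caratheodory
  set L := m.toMeasure hle with hL
  have hLapp : ∀ s, MeasurableSet s → L s = HM μ q ξ s := fun s hs => toMeasure_apply m hle hs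
  set lam := L.restrict E with hlam
  have hlapp : ∀ s, MeasurableSet s → lam s = HM μ q ξ (s ∩ E) := fun s hs => by
    rw [hlam, Measure.restrict_apply hs, hLapp _ (hs.inter hEm)]
  have : IsFiniteMeasure lam := ⟨by rw [hlapp _ MeasurableSet.univ, univ_inter]; exact hfin⟩
  set En : ℕ → Set Y := fun n => {x ∈ E | ∀ r, 0 < r → r < 1 / ((n : ℝ) + 1) →
        lam (closedBall x r) ≤ t * ballWeight μ q ξ (closedBall x r)} with hEn
  have hmono : Monotone En := by
    intro n k hnk x hx
    refine ⟨hx.1, fun r hr hrr => hx.2 r hr (hrr.trans_le ?_)⟩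
    have : (n : ℝ) ≤ k := by exact_mod_cast hnk
    gcongr
  refine ⟨lam, En, fun n x hx => hx.1, ?_, ?_⟩
  · rw [← hmono.measure_iUnion]
    set C := E \ toMeasurable lam (⋃ n, En n) with hC
    have hCm : MeasurableSet C := hEm.diff (measurableSet_toMeasurable _ _)
    have hCE : C ⊆ E := fun x hx => hx.1
    have hlC : lam C = HM μ q ξ C := by rw [hlapp C hCm, inter_eq_left.2 hCE]
    have hCA : ∀ x ∈ C, ∀ ρ > 0, ∃ r, 0 < r ∧ r < ρ ∧
        t * ballWeight μ q ξ (closedBall x r) < lam (closedBall x r) := by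
      intro x hx ρ hρ
      by_contra! hcon
      obtain ⟨n, hn⟩ := exists_nat_one_div_lt hρ
      exact hx.2 (subset_toMeasurable _ _
        (mem_iUnion.2 ⟨n, hx.1, fun r hr hrr => hcon r hr (hrr.trans hn)⟩))
    have hkey : t * lam C ≤ lam C := by
      conv_rhs => rw [Set.measure_eq_iInf_isOpen C lam]
      refine le_iInf₂ fun U hCU => le_iInf fun hU => ?_
      rw [hlC]
      have : HM μ q ξ C ≤ lam U / t := by
        refine aux_HM_le μ q ξ fun F hF δ hδ => ?_
        rw [ENNReal.le_div_iff_mul_le (Or.inl (zero_lt_one.trans ht).ne')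
          (Or.inr (measure_ne_top _ _)), mul_comm]
        exact aux_vitali μ hμ q ξ h0 hξD lam t ht.le F U ((hF.trans hCE).trans hE) hU
          (hF.trans hCU) (fun x hx => hCA x (hF hx)) δ hδ
      rw [mul_comm]
      exact ENNReal.mul_le_of_le_div this
    have hC0 : lam C = 0 := by
      by_contra hne
      have h1 : 1 * lam C < t * lam C :=
        ENNReal.mul_lt_mul_left hne (measure_ne_top _ _) ht
      rw [one_mul] at h1
      exact absurd hkey (not_le.2 h1)
    calc HM μ q ξ E = lam E := by rw [hlapp E hEm, inter_self]
      _ ≤ lam (C ∪ toMeasurable lam (⋃ n, En n)) := measure_mono (by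
          intro x hx
          by_cases h : x ∈ toMeasurable lam (⋃ n, En n)
          · exact Or.inr h
          · exact Or.inl ⟨hx, h⟩)
      _ ≤ lam C + lam (toMeasurable lam (⋃ n, En n)) := measure_union_le _ _
      _ = _ := by rw [hC0, zero_add, measure_toMeasurable]
  · intro n x hx r hr hrr
    rcases hr.eq_or_lt with rfl | hr
    · rw [closedBall_zero, hlapp _ (measurableSet_singleton x),
        inter_eq_left.2 (singleton_subset_iff.2 hx.1)]
      have := aux_HM_singleton μ q ξ h0 x
      rw [closedBall_zero] at this
      calc _ ≤ _ := this
        _ = 1 * ballWeight μ q ξ {x} := (one_mul _).symm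
        _ ≤ _ := by gcongr
    · exact hx.2 r hr hrr

theorem aux_closedBall_min {c : Y} {r δ : ℝ} (hd : diam (closedBall c r) ≤ 2 * δ) :
    closedBall c r = closedBall c (min r (2 * δ)) := by
  apply Subset.antisymm
  · intro y hy
    exact mem_closedBall.2 (le_min hy (aux_mem_dist hd hy))
  · exact closedBall_subset_closedBall (min_le_left _ _)

variable {Z : Type*} [MetricSpace Z] [MeasurableSpace Z]

theorem aux_prod_weight (μ : Measure Y) [IsProbabilityMeasure μ] (ν : Measure Z)
    [IsProbabilityMeasure ν] (q : ℝ) (ξ : Set Y → ℝ≥0∞) (ξ' : Set Z → ℝ≥0∞)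
    {B : Set Y} {B' : Set Z} (hB : B.Nonempty) (hB' : B'.Nonempty) :
    ballWeight (μ.prod ν) q (prodPre ξ ξ') (B ×ˢ B') =
      ballWeight μ q ξ B * ballWeight ν q ξ' B' := by
  unfold ballWeight prodPre
  rw [Measure.prod_prod, aux_epow_mul (measure_ne_top _ _) (measure_ne_top _ _),
    fst_image_prod _ hB', snd_image_prod hB]
  ring

theorem aux_diam_fst {B : Set Y} {B' : Set Z} (hb : Bornology.IsBounded (B ×ˢ B'))
    (hB' : B'.Nonempty) : diam B ≤ diam (B ×ˢ B') := by
  obtain ⟨z, hz⟩ := hB'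
  refine diam_le_of_forall_dist_le diam_nonneg fun x hx y hy => ?_
  have := dist_le_diam_of_mem hb (x := (x, z)) (y := (y, z)) ⟨hx, hz⟩ ⟨hy, hz⟩
  rw [Prod.dist_eq] at this
  exact (le_max_left _ _).trans this

theorem aux_diam_snd {B : Set Y} {B' : Set Z} (hb : Bornology.IsBounded (B ×ˢ B'))
    (hB : B.Nonempty) : diam B' ≤ diam (B ×ˢ B') := by
  obtain ⟨z, hz⟩ := hB
  refine diam_le_of_forall_dist_le diam_nonneg fun x hx y hy => ?_
  have := dist_le_diam_of_mem hb (x := (z, x)) (y := (z, y)) ⟨hz, hx⟩ ⟨hz, hy⟩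
  rw [Prod.dist_eq] at this
  exact (le_max_right _ _).trans this

theorem aux_prod_step [BorelSpace Y]
    (μ : Measure Y) [IsProbabilityMeasure μ] (ν : Measure Z)
    [IsProbabilityMeasure ν] (q : ℝ) (ξ : Set Y → ℝ≥0∞) (ξ' : Set Z → ℝ≥0∞)
    (h0 : ξ' ∅ = 0) (lam : Measure Y) (t : ℝ≥0∞) (ht : 1 < t) (htt : t ≠ ∞) (F : Set Y) (F' : Set Z)
    (δ : ℝ) (hδ : 0 < δ)
    (hF : ∀ x ∈ F, ∀ r, 0 ≤ r → r ≤ 2 * δ →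
        lam (closedBall x r) ≤ t * ballWeight μ q ξ (closedBall x r)) :
    lam F * Hd ν q ξ' δ F' ≤ t * Hd (μ.prod ν) q (prodPre ξ ξ') δ (F ×ˢ F') := by
  rcases F.eq_empty_or_nonempty with rfl | hFne
  · simp
  rcases F'.eq_empty_or_nonempty with rfl | hFne'
  · simp [aux_Hd_empty]
  -- bound for every cover
  have key : ∀ c r, IsCenteredCover (F ×ˢ F') δ c r → lam F * Hd ν q ξ' δ F' ≤
      t * ∑' i, ballWeight (μ.prod ν) q (prodPre ξ ξ') (closedBall (c i) (r i)) := by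
    intro c r hcr
    have hball : ∀ i, closedBall (c i) (r i) =
        closedBall (c i).1 (r i) ×ˢ closedBall (c i).2 (r i) := fun i =>
      (closedBall_prod_same (c i).1 (c i).2 (r i)).symm
    have hdd : ∀ i, diam (closedBall (c i).1 (r i)) ≤ 2 * δ ∧
        diam (closedBall (c i).2 (r i)) ≤ 2 * δ := by
      intro i
      by_cases hr : 0 ≤ r i
      · have hd := hcr.2.1 i
        have hb : Bornology.IsBounded (closedBall (c i) (r i)) := isBounded_closedBall
        rw [hball] at hd hb
        exact ⟨(aux_diam_fst hb (nonempty_closedBall.2 hr)).trans hd,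
          (aux_diam_snd hb (nonempty_closedBall.2 hr)).trans hd⟩
      · rw [closedBall_eq_empty.2 (not_le.1 hr), closedBall_eq_empty.2 (not_le.1 hr)]
        simp [hδ.le]
    set g : ℕ → ℝ≥0∞ := fun i => ballWeight ν q ξ' (closedBall (c i).2 (r i)) with hg
    set f : Y → ℝ≥0∞ := fun x => ∑' i, (closedBall (c i).1 (r i)).indicator (fun _ => g i) x
      with hf
    have hsec : ∀ x ∈ F, Hd ν q ξ' δ F' ≤ f x := by
      intro x hx
      have h1 := aux_Hd_le ν q ξ' h0 hδ.le (F := F')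
        (fun i : {i | x ∈ closedBall (c i).1 (r i)} => (c i).2) (fun i => r i)
        (fun i => (hcr.1 i).2) (fun i => (hdd i).2) (by
          intro y hy
          obtain ⟨i, hi⟩ := mem_iUnion.1 (hcr.2.2 (mk_mem_prod hx hy))
          rw [hball] at hi
          exact mem_iUnion.2 ⟨⟨i, hi.1⟩, hi.2⟩)
      refine h1.trans ?_
      rw [tsum_subtype {i | x ∈ closedBall (c i).1 (r i)} g]
      refine ENNReal.tsum_le_tsum fun i => ?_
      by_cases hi : x ∈ closedBall (c i).1 (r i)
      · rw [indicator_of_mem (by exact hi), indicator_of_mem hi]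
      · rw [indicator_of_notMem (by exact hi)]; exact bot_le
    have hmeas : ∀ i, Measurable ((closedBall (c i).1 (r i)).indicator (fun _ : Y => g i)) :=
      fun i => measurable_const.indicator measurableSet_closedBall
    have hfm : Measurable f := Measurable.ennreal_tsum hmeas
    calc lam F * Hd ν q ξ' δ F' ≤ lam {x | Hd ν q ξ' δ F' ≤ f x} * Hd ν q ξ' δ F' := by
          gcongr
          exact hsec
      _ = Hd ν q ξ' δ F' * lam {x | Hd ν q ξ' δ F' ≤ f x} := mul_comm _ _
      _ ≤ ∫⁻ x, f x ∂lam := mul_meas_ge_le_lintegral hfm _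
      _ = ∑' i, g i * lam (closedBall (c i).1 (r i)) := by
          rw [hf, lintegral_tsum fun i => (hmeas i).aemeasurable]
          refine tsum_congr fun i => ?_
          rw [lintegral_indicator_const measurableSet_closedBall]
      _ ≤ ∑' i, t * ballWeight (μ.prod ν) q (prodPre ξ ξ') (closedBall (c i) (r i)) := by
          refine ENNReal.tsum_le_tsum fun i => ?_
          by_cases hr : 0 ≤ r i
          · rw [hball, aux_prod_weight μ ν q ξ ξ' (nonempty_closedBall.2 hr)
              (nonempty_closedBall.2 hr)]
            have h2 := hF (c i).1 (hcr.1 i).1 (min (r i) (2 * δ)) (le_min hr (by positivity))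
              (min_le_right _ _)
            rw [← aux_closedBall_min (hdd i).1] at h2
            rw [mul_comm (g i), ← mul_assoc]
            exact mul_le_mul_left h2 _
          · rw [closedBall_eq_empty.2 (not_le.1 hr), measure_empty, mul_zero]
            exact bot_le
      _ = _ := ENNReal.tsum_mul_left
  have hdiv : (lam F * Hd ν q ξ' δ F') / t ≤ Hd (μ.prod ν) q (prodPre ξ ξ') δ (F ×ˢ F') := by
    conv_rhs => unfold Hd
    rw [if_neg (hFne.prod hFne').ne_empty]
    refine le_iInf fun c => le_iInf fun r => le_iInf fun hcr => ?_
    exact ENNReal.div_le_of_le_mul' (key c r hcr)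
  rwa [ENNReal.div_le_iff (zero_lt_one.trans ht).ne' htt, mul_comm _ t] at hdiv

end Helpers

section Thms

variable [MetricSpace X] [SeparableSpace X] [MeasurableSpace X] [BorelSpace X]
variable [MetricSpace X'] [SeparableSpace X'] [MeasurableSpace X'] [BorelSpace X']

theorem stmt19 (q : ℝ) (μ : Measure X) [IsProbabilityMeasure μ] (hμ : MeasureBlanketed μ)
    (ν : Measure X') [IsProbabilityMeasure ν] (hν : MeasureBlanketed ν)
    (ξ : Set X → ℝ≥0∞) (ξ' : Set X' → ℝ≥0∞)
    (hξ : IsPremeasure ξ) (hξD : PremeasureBlanketed ξ)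
    (hξ' : IsPremeasure ξ') (hξD' : PremeasureBlanketed ξ')
    (E : Set X) (E' : Set X') (hEm : MeasurableSet E) (hE'm : MeasurableSet E')
    (hE : E ⊆ measSupport μ) (hE' : E' ⊆ measSupport ν)
    (hfin : HM μ q ξ E < ∞) (hfin' : HM ν q ξ' E' < ∞) :
    HM μ q ξ E * HM ν q ξ' E' ≤ HM (μ.prod ν) q (prodPre ξ ξ') (E ×ˢ E') := by
  set P := HM (μ.prod ν) q (prodPre ξ ξ') (E ×ˢ E') with hP
  have key : ∀ t : ℝ≥0∞, 1 < t → t ≠ ∞ → HM μ q ξ E * HM ν q ξ' E' ≤ t * P := by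
    intro t ht htt
    obtain ⟨lam, En, hEn, hsup, hden⟩ := aux_density μ hμ q ξ hξ.1 hξD E hEm hE hfin t ht
    refine (mul_le_mul_left hsup _).trans ?_
    rw [ENNReal.iSup_mul]
    refine iSup_le fun n => ?_
    simp only [HM, H0, ENNReal.mul_iSup]
    refine iSup₂_le fun F' hF' => iSup₂_le fun δ hδ => ?_
    have hn : (0 : ℝ) < 1 / ((n : ℝ) + 1) := by positivity
    set η := min δ (1 / ((n : ℝ) + 1) / 4) with hη
    have hηpos : 0 < η := by positivity
    have hη2 : η ≤ 1 / ((n : ℝ) + 1) / 4 := min_le_right _ _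
    calc lam (En n) * Hd ν q ξ' δ F' ≤ lam (En n) * Hd ν q ξ' η F' := by
          gcongr
          exact aux_Hd_anti _ _ _ (min_le_left _ _) _
      _ ≤ t * Hd (μ.prod ν) q (prodPre ξ ξ') η (En n ×ˢ F') :=
          aux_prod_step μ ν q ξ ξ' hξ'.1 lam t ht htt (En n) F' η hηpos
            (fun x hx r hr hrr => hden n x hx r hr (by linarith))
      _ ≤ t * P := by
          gcongr
          exact aux_Hd_le_HM _ _ _ hηpos (prod_mono (hEn n) hF')
  by_cases hPtop : P = ∞
  · rw [hPtop]; exact le_top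
  have hlim : Tendsto (fun t : ℝ≥0∞ => t * P) (nhdsWithin 1 (Ioi 1)) (nhds (1 * P)) :=
    (ENNReal.Tendsto.mul_const tendsto_id (Or.inr hPtop)).mono_left nhdsWithin_le_nhds
  have : (nhdsWithin (1 : ℝ≥0∞) (Ioi 1)).NeBot :=
    nhdsGT_neBot_of_exists_gt ⟨∞, ENNReal.one_lt_top⟩
  rw [one_mul] at hlim
  refine ge_of_tendsto hlim ?_
  filter_upwards [self_mem_nhdsWithin,
    mem_nhdsWithin_of_mem_nhds (Iio_mem_nhds ENNReal.one_lt_top)] with t h1 h2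
  exact key t h1 (ne_of_lt h2)

end Thms
end
end
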